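/- arXiv:2605.11025 — 5 statements merged into one kernel-verified Lean document; each statement's English description precedes it below -/
import Mathlib

section
/- Let G be a simple graph on vertex set V, and let A, B ⊆ V with A ∪ B = V be such that every edge of G has both endpoints in A or both endpoints in B. Let r ∈ ℕ, and let c₁ : A → Fin r and c₂ : B → Fin r be proper colorings of the induced subgraphs G[A] and G[B], respectively, such that for all u, v ∈ A ∩ B, c₁(u) = c₁(v) if and only if c₂(u) = c₂(v). Then G admits a proper coloring c : V → Fin r with c(u) = c₁(u) for every u ∈ A. In particular, G is r-colorable. -/
/-! Since `c₁` and `c₂` identify the same pairs of vertices of `A ∩ B`, the assignment `c₂ u ↦ c₁ u`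
is a well-defined injection on the colors that `c₂` uses there. These colors are finite in number,
so the injection extends to a permutation `σ` of all colors; then `c₁` and `σ ∘ c₂` agree on
`A ∩ B` and glue to a proper coloring, because every edge lies within `A` or within `B`. -/

open SimpleGraph

theorem exists_perm_apply_eq_of_ker_eq {ι α : Type*} {f g : ι → α} (hf : (Set.range f).Finite)
    (hker : Setoid.ker f = Setoid.ker g) : ∃ σ : Equiv.Perm α, ∀ i, σ (f i) = g i := by
  have : Finite (Set.range f) := hf
  have : Finite (Quotient (Setoid.ker f)) := .of_equiv _ (Setoid.quotientKerEquivRange f).symm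
  obtain ⟨σ, hσ⟩ := Equiv.Perm.exists_extending_pair
    (Setoid.kerLift f) (Setoid.kerLift g ∘ Quotient.congrRight (Setoid.ext_iff.mp hker))
    (Setoid.kerLift_injective f) ((Setoid.kerLift_injective g).comp (Equiv.injective _))
  exact ⟨σ, fun i => hσ ⟦i⟧⟩

section Gluing

variable {V : Type*} {G : SimpleGraph V} {A B : Set V}

theorem exists_hom_extending_of_eqOn_inter {W : Type*} {H : SimpleGraph W}
    (hcover : A ∪ B = Set.univ)
    (hedges : ∀ u v, G.Adj u v → (u ∈ A ∧ v ∈ A) ∨ (u ∈ B ∧ v ∈ B))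
    (f : G.induce A →g H) (g : G.induce B →g H)
    (hagree : ∀ u (huA : u ∈ A) (huB : u ∈ B), f ⟨u, huA⟩ = g ⟨u, huB⟩) :
    ∃ φ : G →g H, (∀ u : A, φ u = f u) ∧ ∀ u : B, φ u = g u := by
  classical
  have mem_B {u : V} (hu : u ∉ A) : u ∈ B :=
    (Set.eq_univ_iff_forall.mp hcover u).resolve_left hu
  let φ (u : V) : W := if hu : u ∈ A then f ⟨u, hu⟩ else g ⟨u, mem_B hu⟩
  have φ_eq_f (u : A) : φ u = f u := dif_pos u.2
  have φ_eq_g (u : B) : φ u = g u := by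
    by_cases hu : (u : V) ∈ A
    · exact (φ_eq_f ⟨u, hu⟩).trans (hagree u hu u.2)
    · exact dif_neg hu
  have φ_adj {u v : V} (huv : G.Adj u v) : H.Adj (φ u) (φ v) := by
    rcases hedges u v huv with ⟨hu, hv⟩ | ⟨hu, hv⟩
    · rw [φ_eq_f ⟨u, hu⟩, φ_eq_f ⟨v, hv⟩]
      exact f.map_adj huv
    · rw [φ_eq_g ⟨u, hu⟩, φ_eq_g ⟨v, hv⟩]
      exact g.map_adj huv
  exact ⟨⟨φ, φ_adj⟩, φ_eq_f, φ_eq_g⟩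

theorem stmt_5_general {α : Type*} (hcover : A ∪ B = Set.univ)
    (hedges : ∀ u v, G.Adj u v → (u ∈ A ∧ v ∈ A) ∨ (u ∈ B ∧ v ∈ B))
    (c₁ : (G.induce A).Coloring α) (c₂ : (G.induce B).Coloring α)
    (hfin : (c₂ '' (Subtype.val ⁻¹' A)).Finite)
    (hagree : ∀ (u v : V) (huA : u ∈ A) (huB : u ∈ B) (hvA : v ∈ A) (hvB : v ∈ B),
      c₁ ⟨u, huA⟩ = c₁ ⟨v, hvA⟩ ↔ c₂ ⟨u, huB⟩ = c₂ ⟨v, hvB⟩) :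
    ∃ c : G.Coloring α, ∀ u : A, c u = c₁ u := by
  let d₁ (u : ↥(A ∩ B)) : α := c₁ ⟨u, u.2.1⟩
  let d₂ (u : ↥(A ∩ B)) : α := c₂ ⟨u, u.2.2⟩
  have range_finite : (Set.range d₂).Finite :=
    hfin.subset <| Set.range_subset_iff.mpr fun u => ⟨⟨u, u.2.2⟩, u.2.1, rfl⟩
  have ker_eq : Setoid.ker d₂ = Setoid.ker d₁ :=
    Setoid.ext fun u v => (hagree u v u.2.1 u.2.2 v.2.1 v.2.2).symm
  obtain ⟨σ, hσ⟩ := exists_perm_apply_eq_of_ker_eq range_finite ker_eq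
  obtain ⟨c, c_eq_c₁, -⟩ := exists_hom_extending_of_eqOn_inter hcover hedges
    c₁ (recolorOfEquiv _ σ c₂) fun u huA huB => (hσ ⟨u, huA, huB⟩).symm
  exact ⟨c, c_eq_c₁⟩

end Gluing

/-- **Gluing proper colorings along a separator.** Let `G` be a simple graph on `V`,
and let `A, B ⊆ V` with `A ∪ B = V` be such that every edge of `G` lies within `A` or
within `B`.  If `c₁` and `c₂` are proper `r`-colorings of the induced subgraphs `G[A]`
and `G[B]` inducing the same partition on `A ∩ B`, then `G` admits a proper `r`-coloring
extending `c₁`; in particular `G` is `r`-colorable. -/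
theorem stmt_5 {V : Type*} (G : SimpleGraph V) (A B : Set V)
    (hcover : A ∪ B = Set.univ)
    (hedges : ∀ u v : V, G.Adj u v → (u ∈ A ∧ v ∈ A) ∨ (u ∈ B ∧ v ∈ B))
    (r : ℕ) (c₁ : A → Fin r) (c₂ : B → Fin r)
    (hc₁ : ∀ u v : A, G.Adj u.val v.val → c₁ u ≠ c₁ v)
    (hc₂ : ∀ u v : B, G.Adj u.val v.val → c₂ u ≠ c₂ v)
    (hagree : ∀ (u v : V) (huA : u ∈ A) (huB : u ∈ B) (hvA : v ∈ A) (hvB : v ∈ B),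
      c₁ ⟨u, huA⟩ = c₁ ⟨v, hvA⟩ ↔ c₂ ⟨u, huB⟩ = c₂ ⟨v, hvB⟩) :
    (∃ c : V → Fin r, (∀ u v : V, G.Adj u v → c u ≠ c v) ∧
      ∀ (u : V) (hu : u ∈ A), c u = c₁ ⟨u, hu⟩) ∧ G.Colorable r := by
  obtain ⟨c, hc⟩ := stmt_5_general hcover hedges (Coloring.mk c₁ fun {u v} => hc₁ u v)
    (Coloring.mk c₂ fun {u v} => hc₂ u v) (Set.toFinite _) hagree
  exact ⟨⟨c, fun _ _ => c.valid, fun u hu => hc ⟨u, hu⟩⟩, ⟨c⟩⟩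
end

section
/- Every finite simple triangle-free graph G that admits a path decomposition of width at most 5 satisfies χ(G) ≤ ⌈(Δ(G) + 3)/2⌉, where χ(G) is the chromatic number and Δ(G) the maximum degree of G. That is, Reed's conjecture for triangle-free graphs holds on the class of graphs of pathwidth at most 5. -/
/-- `G` admits a path decomposition of width at most `w`: a finite sequence of bags
`Bag 0, …, Bag (m-1)` such that every vertex lies in some bag, every edge has both
endpoints in some bag, the bags containing any fixed vertex occur at consecutive
indices, and every bag has at most `w + 1` vertices. -/
def HasPathDecompOfWidth {V : Type*} [DecidableEq V] (G : SimpleGraph V) (w : ℕ) : Prop :=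
  ∃ (m : ℕ) (Bag : Fin m → Finset V),
    (∀ v : V, ∃ i, v ∈ Bag i) ∧
    (∀ u v : V, G.Adj u v → ∃ i, u ∈ Bag i ∧ v ∈ Bag i) ∧
    (∀ (v : V) (i j l : Fin m), i ≤ j → j ≤ l → v ∈ Bag i → v ∈ Bag l → v ∈ Bag j) ∧
    (∀ i, (Bag i).card ≤ w + 1)

/-!
A triangle-free graph of treewidth at most 5 is 4-colorable, which is enough when `4 ≤ Δ`; when
`Δ ≤ 3`, greedy coloring and Brooks' theorem suffice.

Embed `G` in a chordal graph `H` with cliques of at most `w + 1` vertices, and color the vertices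
so that each new vertex `v` is simplicial in `H` among those already colored. Its earlier
neighbors in `H` form a clique `T` with at most `w` vertices. A greedy coloring would avoid all
colors of the set `N ⊆ T` of neighbors of `v` in `G`, and may get stuck only if `N`, which is
independent because `G` is triangle-free, carries all the colors. So one maintains the invariant
that no clique of `H` contains a rainbow independent set of `G`, one on which all colors occur.
The new color `x` must then be missing on `N`, and no independent subset of `T \ N` may carry all
colors other than `x`. An exchange argument shows that such an `x` exists if there are `k` colors
and `w + 3 ≤ 2 * k`.

For Brooks' theorem, one takes a cycle that contains all neighbors of one of its vertices, colors
everything else by induction, and then colors the cycle greedily towards a vertex two of whose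
neighbors share a color.
-/

section PartialColoring

variable {V α : Type*} {G : SimpleGraph V}

/-- The restriction of `c` to `T` is a proper coloring of the subgraph of `G` induced on `T`.
Partial colorings are encoded as total functions so that they can be extended vertex by vertex. -/
def IsProperOn (G : SimpleGraph V) (c : V → α) (T : Set V) : Prop :=
  ∀ u ∈ T, ∀ v ∈ T, G.Adj u v → c u ≠ c v

lemma IsProperOn.update_insert [DecidableEq V] {c : V → α} {T : Set V} {v : V} {x : α}
    (hc : IsProperOn G c T) (hv : v ∉ T) (hx : ∀ u ∈ T, G.Adj v u → c u ≠ x) :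
    IsProperOn G (Function.update c v x) (insert v T) := by
  have hne {u : V} (hu : u ∈ T) : Function.update c v x u = c u :=
    Function.update_of_ne (ne_of_mem_of_not_mem hu hv) ..
  rintro u (rfl | hu) w (rfl | hw) huw
  · exact (huw.ne rfl).elim
  · rw [hne hw, Function.update_self]
    exact (hx w hw huw).symm
  · rw [hne hu, Function.update_self]
    exact hx u hu huw.symm
  · rw [hne hu, hne hw]
    exact hc u hu w hw huw

lemma IsProperOn.compl_sdiff_singleton {c : V → α} {C : Set V} {v : V}
    (hc : IsProperOn G c Cᶜ) (hv : v ∈ C) (hvC : ∀ u, G.Adj v u → u ∈ C) :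
    IsProperOn G c (C \ {v})ᶜ := by
  classical
  rw [Set.compl_sdiff, Set.singleton_union]
  simpa using hc.update_insert (x := c v) (by simpa) fun u hu hvu => (hu (hvC u hvu)).elim

lemma IsProperOn.colorable [Fintype α] {c : V → α} (hc : IsProperOn G c Set.univ) :
    G.Colorable (Fintype.card α) :=
  (SimpleGraph.Coloring.mk c fun {u v} => hc u trivial v trivial).colorable

lemma exists_isProperOn_of_coloring_induce [Nonempty α] {T : Set V}
    (C : (G.induce T).Coloring α) : ∃ c : V → α, IsProperOn G c T := by
  classical
  refine ⟨fun v => if hv : v ∈ T then C ⟨v, hv⟩ else Classical.arbitrary α, fun u hu v hv huv => ?_⟩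
  simpa only [dif_pos hu, dif_pos hv] using C.valid (v := ⟨u, hu⟩) (w := ⟨v, hv⟩) huv

end PartialColoring

section RainbowIndepSet

variable {V α : Type*} {G : SimpleGraph V} {c : V → α}

/-- `D` contains an independent set of `G` on which every color of `Q` occurs. -/
def HasRainbowIndepSet (G : SimpleGraph V) (c : V → α) (D : Set V) (Q : Set α) : Prop :=
  ∃ I ⊆ D, G.IsIndepSet I ∧ Q ⊆ c '' I

lemma HasRainbowIndepSet.mono {D E : Set V} {P Q : Set α} (hDE : D ⊆ E) (hPQ : P ⊆ Q)
    (h : HasRainbowIndepSet G c D Q) : HasRainbowIndepSet G c E P := by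
  obtain ⟨I, hID, hI, hQI⟩ := h
  exact ⟨I, hID.trans hDE, hI, hPQ.trans hQI⟩

lemma HasRainbowIndepSet.subset_image {D : Set V} {Q : Set α}
    (h : HasRainbowIndepSet G c D Q) : Q ⊆ c '' D := by
  obtain ⟨I, hID, -, hQI⟩ := h
  exact hQI.trans (Set.image_mono hID)

lemma exists_mem_injOn_fiber_of_card_lt [Fintype α] {D : Finset V} {X : Finset α}
    (hD : ∀ x, x ∈ c '' D) (hcard : D.card < Fintype.card α + X.card) :
    ∃ x ∈ X, ∀ u ∈ D, ∀ v ∈ D, c u = x → c v = x → u = v := by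
  classical
  by_contra! htwo
  have hfiber (x : α) : 1 + (if x ∈ X then 1 else 0) ≤ (D.filter (c · = x)).card := by
    split_ifs with hx
    · obtain ⟨u, hu, v, hv, hcu, hcv, huv⟩ := htwo x hx
      exact Finset.one_lt_card.2 ⟨u, by simp [hu, hcu], v, by simp [hv, hcv], huv⟩
    · obtain ⟨u, hu, hcu⟩ := hD x
      exact Finset.card_pos.2 ⟨u, Finset.mem_filter.2 ⟨hu, hcu⟩⟩
  have hsum := Finset.sum_le_sum fun x (_ : x ∈ Finset.univ) => hfiber x
  rw [← Finset.card_eq_sum_card_fiberwise (fun u _ => Finset.mem_univ (c u)),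
    Finset.sum_add_distrib, Finset.sum_boole] at hsum
  simp at hsum
  omega

lemma HasRainbowIndepSet.univ_of_compl_singleton {D : Set V} {x : α} {a : V}
    (h : HasRainbowIndepSet G c D {x}ᶜ) (haD : a ∈ D) (hax : c a = x)
    (hadj : ∀ v ∈ D, ¬ G.Adj a v) : HasRainbowIndepSet G c D Set.univ := by
  obtain ⟨I, hID, hI, hxI⟩ := h
  refine ⟨insert a I, Set.insert_subset haD hID, ?_, fun z _ => ?_⟩
  · refine Set.Pairwise.insert hI fun v hv _ => ?_
    have hav := hadj v (hID hv)
    exact ⟨hav, fun hva => hav hva.symm⟩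
  · by_cases hzx : z = x
    · exact ⟨a, Set.mem_insert _ _, hax.trans hzx.symm⟩
    · exact Set.image_mono (Set.subset_insert a I) (hxI hzx)

lemma HasRainbowIndepSet.not_adj_of_not_sdiff_singleton {D : Set V} {Q : Set α} {a v : V}
    (h : HasRainbowIndepSet G c D Q) (hv : ¬ HasRainbowIndepSet G c (D \ {v}) Q)
    (haQ : c a ∈ Q) (hunique : ∀ b ∈ D, c b = c a → b = a) : ¬ G.Adj a v := by
  intro hav
  obtain ⟨I, hID, hI, hQI⟩ := h
  have hvI : v ∈ I := by
    by_contra hvI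
    exact hv ⟨I, Set.subset_sdiff_singleton hID hvI, hI, hQI⟩
  obtain ⟨b, hbI, hba⟩ := hQI haQ
  obtain rfl := hunique b (hID hbI) hba
  exact hI hbI hvI hav.ne hav

-- If no vertex can be discarded together with a color of `X`, take `x ∈ X` occurring only at
-- `a ∈ D`. Each `v ∈ D` is needed for some `{y}ᶜ` with `y ≠ x`, in a set that must contain `a`.
-- So `a` has no neighbors in `D` and can be added to the independent set for `{x}ᶜ`.
theorem hasRainbowIndepSet_univ_of_forall_compl_singleton [Fintype α] {D : Finset V}
    {X : Finset α} (hX : X.Nonempty) (hcard : D.card + 3 ≤ Fintype.card α + X.card)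
    (h : ∀ x ∈ X, HasRainbowIndepSet G c D {x}ᶜ) : HasRainbowIndepSet G c D Set.univ := by
  classical
  induction hn : X.card generalizing D X with
  | zero => simp_all
  | succ n ih =>
  have hX_nontrivial : X.Nontrivial := by
    rw [← Finset.one_lt_card_iff_nontrivial]
    obtain ⟨x, hx⟩ := hX
    have hle : ({x}ᶜ : Finset α).card ≤ (D.image c).card :=
      Finset.card_le_card (by simpa [← Finset.coe_subset] using (h x hx).subset_image)
    have := hle.trans Finset.card_image_le
    rw [Finset.card_compl, Finset.card_singleton] at this
    omega
  have hsurj (z : α) : z ∈ c '' D := by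
    obtain ⟨x, hx, hxz⟩ := hX_nontrivial.exists_ne z
    exact (h x hx).subset_image hxz.symm
  by_cases hdel : ∃ v ∈ D, ∃ x ∈ X, ∀ y ∈ X.erase x, HasRainbowIndepSet G c (D.erase v) {y}ᶜ
  · obtain ⟨v, hv, x, hx, hvx⟩ := hdel
    have hDcard := Finset.card_erase_add_one hv
    have hXcard := Finset.card_erase_add_one hx
    have hXne : (X.erase x).Nonempty := (Finset.erase_nonempty hx).2 hX_nontrivial
    exact (ih hXne (by omega) hvx (by omega)).mono (mod_cast D.erase_subset v) subset_rfl
  · push Not at hdel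
    obtain ⟨x, hx, hunique⟩ := exists_mem_injOn_fiber_of_card_lt (X := X) hsurj (by omega)
    obtain ⟨a, ha, rfl⟩ := hsurj x
    refine (h _ hx).univ_of_compl_singleton ha rfl fun v hv => ?_
    obtain ⟨y, hy, hvy⟩ := hdel v hv _ hx
    obtain ⟨hyx, hyX⟩ := Finset.mem_erase.1 hy
    rw [Finset.coe_erase] at hvy
    exact (h y hyX).not_adj_of_not_sdiff_singleton hvy hyx.symm
      fun b hb hba => hunique b hb a ha hba rfl

theorem exists_color_of_not_hasRainbowIndepSet [Fintype α] {N D : Finset V}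
    (hindep : G.IsIndepSet N) (hN : ¬ HasRainbowIndepSet G c N Set.univ)
    (hD : ¬ HasRainbowIndepSet G c D Set.univ)
    (hcard : N.card + D.card + 3 ≤ 2 * Fintype.card α) :
    ∃ x, (∀ u ∈ N, c u ≠ x) ∧ ¬ HasRainbowIndepSet G c D {x}ᶜ := by
  classical
  by_contra! hall
  let X : Finset α := (N.image c)ᶜ
  have hX : X.Nonempty := by
    by_contra hX
    rw [Finset.not_nonempty_iff_eq_empty, Finset.compl_eq_empty_iff] at hX
    refine hN ⟨N, subset_rfl, hindep, fun x _ => ?_⟩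
    simp [← Finset.coe_image, hX]
  have hXcard : Fintype.card α ≤ X.card + N.card := by
    rw [Finset.card_compl]
    have : (N.image c).card ≤ N.card := Finset.card_image_le
    omega
  refine hD (hasRainbowIndepSet_univ_of_forall_compl_singleton hX (by omega) fun x hx => ?_)
  refine hall x fun u hu hux => ?_
  exact Finset.mem_compl.1 hx (Finset.mem_image.2 ⟨u, hu, hux⟩)

lemma HasRainbowIndepSet.of_update [DecidableEq V] {v : V} {x : α} {D Q : Set V}
    (hQD : v ∈ Q → ∀ u ∈ Q, u ≠ v → ¬ G.Adj v u → u ∈ D)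
    (h : HasRainbowIndepSet G (Function.update c v x) Q Set.univ) :
    HasRainbowIndepSet G c (Q \ {v}) Set.univ ∨ HasRainbowIndepSet G c D {x}ᶜ := by
  obtain ⟨I, hIQ, hI, hcI⟩ := h
  by_cases hvI : v ∈ I
  · right
    refine ⟨I \ {v}, fun u hu => hQD (hIQ hvI) u (hIQ hu.1) hu.2 (hI hvI hu.1 (Ne.symm hu.2)),
      hI.mono Set.sdiff_subset, fun z hz => ?_⟩
    obtain ⟨u, huI, rfl⟩ := hcI (Set.mem_univ z)
    have huv : u ≠ v := by
      rintro rfl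
      exact hz (Function.update_self ..)
    exact ⟨u, ⟨huI, huv⟩, (Function.update_of_ne huv ..).symm⟩
  · left
    have hEq : Set.EqOn (Function.update c v x) c I := fun u hu =>
      Function.update_of_ne (ne_of_mem_of_not_mem hu hvI) ..
    exact ⟨I, Set.subset_sdiff_singleton hIQ hvI, hI, hcI.trans_eq hEq.image_eq⟩

end RainbowIndepSet

section Chordal

variable {V α : Type*} {G H : SimpleGraph V}

/-- Chordal graphs, via Dirac's characterization: every nonempty finite induced subgraph has a
simplicial vertex. -/
def IsChordal (H : SimpleGraph V) : Prop :=
  ∀ S : Finset V, S.Nonempty → ∃ v ∈ S, H.IsClique {u | u ∈ S ∧ H.Adj v u}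

/-- Treewidth at most `w`, encoded as having a chordal supergraph on the same vertices whose
cliques have at most `w + 1` vertices. -/
def HasTreewidthAtMost (G : SimpleGraph V) (w : ℕ) : Prop :=
  ∃ H, G ≤ H ∧ IsChordal H ∧ H.CliqueFree (w + 2)

/-- No clique of `H` inside `S` contains an independent set of `G` on which all colors occur. -/
def IsRainbowFreeOn (G H : SimpleGraph V) (c : V → α) (S : Set V) : Prop :=
  ∀ Q ⊆ S, H.IsClique Q → ¬ HasRainbowIndepSet G c Q Set.univ

lemma card_lt_of_isClique_of_forall_adj {n : ℕ} {v : V} {T : Finset V}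
    (hT : H.IsClique T) (hv : ∀ u ∈ T, H.Adj v u) (hH : H.CliqueFree (n + 1)) : T.card < n := by
  classical
  by_contra! hn
  have hvT : v ∉ T := fun h => (hv v h).ne rfl
  refine hH.mono (Nat.succ_le_succ hn) (insert v T) ⟨?_, Finset.card_insert_of_notMem hvT⟩
  rw [Finset.coe_insert]
  exact hT.insert fun u hu _ => hv u hu

lemma exists_update_isProperOn_isRainbowFreeOn [Fintype α] [DecidableEq V] {c : V → α}
    {S T : Finset V} {v : V} (hG : G.CliqueFree 3) (hGH : G ≤ H) (hvS : v ∉ S)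
    (hmemT : ∀ u, u ∈ T ↔ u ∈ S ∧ H.Adj v u) (hT : H.IsClique T)
    (hcard : T.card + 3 ≤ 2 * Fintype.card α) (hc : IsProperOn G c S)
    (hrainbow : IsRainbowFreeOn G H c S) :
    ∃ x, IsProperOn G (Function.update c v x) (insert v S) ∧
      IsRainbowFreeOn G H (Function.update c v x) (insert v S) := by
  classical
  let N := T.filter (G.Adj v)
  let D := T.filter (¬ G.Adj v ·)
  have hclique {A : Finset V} (hA : A ⊆ T) : ¬ HasRainbowIndepSet G c A Set.univ :=
    hrainbow A (fun u hu => ((hmemT u).1 (hA hu)).1) (hT.subset (mod_cast hA))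
  have hN : G.IsIndepSet N := (G.isIndepSet_neighborSet_of_triangleFree hG v).mono
    fun u hu => (Finset.mem_filter.1 hu).2
  have hND : N.card + D.card = T.card := Finset.card_filter_add_card_filter_not ..
  obtain ⟨x, hxN, hxD⟩ := exists_color_of_not_hasRainbowIndepSet hN
    (hclique (T.filter_subset _)) (hclique (T.filter_subset _)) (hND ▸ hcard)
  refine ⟨x, hc.update_insert hvS fun u hu hvu => hxN u ?_, fun Q hQS hQ hQrainbow => ?_⟩
  · exact Finset.mem_filter.2 ⟨(hmemT u).2 ⟨hu, hGH hvu⟩, hvu⟩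
  have hQv : Q \ {v} ⊆ S := by simpa [Set.sdiff_subset_iff] using hQS
  refine (hQrainbow.of_update fun hv u hu huv hvu => ?_).elim
    (hrainbow _ hQv (hQ.subset Set.sdiff_subset)) hxD
  exact Finset.mem_filter.2 ⟨(hmemT u).2 ⟨hQv ⟨hu, huv⟩, hQ hv hu huv.symm⟩, hvu⟩

theorem exists_isProperOn_isRainbowFreeOn [Fintype α] {w : ℕ} (hG : G.CliqueFree 3)
    (hGH : G ≤ H) (hchordal : IsChordal H) (hH : H.CliqueFree (w + 2))
    (hw : w + 3 ≤ 2 * Fintype.card α) (S : Finset V) :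
    ∃ c : V → α, IsProperOn G c S ∧ IsRainbowFreeOn G H c S := by
  classical
  induction S using Finset.strongInduction with
  | H S ih =>
  obtain rfl | hS := S.eq_empty_or_nonempty
  · obtain ⟨x⟩ : Nonempty α := Fintype.card_pos_iff.1 (by omega)
    refine ⟨fun _ => x, by simp [IsProperOn], fun Q hQ _ h => ?_⟩
    obtain ⟨u, hu, -⟩ := h.subset_image (Set.mem_univ x)
    simpa using hQ hu
  obtain ⟨v, hv, hsimplicial⟩ := hchordal S hS
  obtain ⟨c, hc, hrainbow⟩ := ih (S.erase v) (Finset.erase_ssubset hv)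
  let T := (S.erase v).filter (H.Adj v)
  have hT : H.IsClique T := hsimplicial.subset fun u hu => by
    obtain ⟨hu, hvu⟩ := Finset.mem_filter.1 hu
    exact ⟨Finset.mem_of_mem_erase hu, hvu⟩
  have hTcard : T.card < w + 1 :=
    card_lt_of_isClique_of_forall_adj hT (fun u hu => (Finset.mem_filter.1 hu).2) hH
  obtain ⟨x, hx⟩ := exists_update_isProperOn_isRainbowFreeOn (T := T) hG hGH (S.notMem_erase v)
    (fun u => Finset.mem_filter) hT (by omega) hc hrainbow
  rw [← Finset.coe_insert, Finset.insert_erase hv] at hx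
  exact ⟨_, hx⟩

theorem HasTreewidthAtMost.colorable [Finite V] {w : ℕ} (hw : HasTreewidthAtMost G w)
    (hG : G.CliqueFree 3) : G.Colorable ((w + 4) / 2) := by
  have := Fintype.ofFinite V
  obtain ⟨H, hGH, hchordal, hH⟩ := hw
  obtain ⟨c, hc, -⟩ := exists_isProperOn_isRainbowFreeOn (α := Fin ((w + 4) / 2)) hG hGH hchordal
    hH (by rw [Fintype.card_fin]; omega) Finset.univ
  rw [Finset.coe_univ] at hc
  simpa using hc.colorable

end Chordal

section PathDecomposition

variable {V ι : Type*}

/-- The graph in which two vertices are adjacent if they share a bag. -/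
def bagGraph (Bag : ι → Finset V) : SimpleGraph V where
  Adj u v := u ≠ v ∧ ∃ i, u ∈ Bag i ∧ v ∈ Bag i
  symm := ⟨fun _ _ ⟨huv, i, hu, hv⟩ => ⟨huv.symm, i, hv, hu⟩⟩
  loopless := ⟨fun _ h => h.1 rfl⟩

variable [LinearOrder ι] {Bag : ι → Finset V} {f : V → ι}

lemma mem_bag_of_bagGraph_adj (hf : ∀ v, IsLeast {i | v ∈ Bag i} (f v))
    (hinterval : ∀ v, {i | v ∈ Bag i}.OrdConnected) {u v : V} (huv : (bagGraph Bag).Adj u v)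
    (hle : f u ≤ f v) : u ∈ Bag (f v) := by
  obtain ⟨-, i, hu, hv⟩ := huv
  exact (hinterval u).out (hf u).1 hu ⟨hle, (hf v).2 hv⟩

lemma isChordal_bagGraph (hf : ∀ v, IsLeast {i | v ∈ Bag i} (f v))
    (hinterval : ∀ v, {i | v ∈ Bag i}.OrdConnected) : IsChordal (bagGraph Bag) := by
  intro S hS
  obtain ⟨v, hv, hmax⟩ := S.exists_max_image f hS
  have hbag {u : V} (hu : u ∈ S) (hvu : (bagGraph Bag).Adj v u) : u ∈ Bag (f v) :=
    mem_bag_of_bagGraph_adj hf hinterval hvu.symm (hmax u hu)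
  exact ⟨v, hv, fun _ hu _ hw huw => ⟨huw, f v, hbag hu.1 hu.2, hbag hw.1 hw.2⟩⟩

lemma cliqueFree_bagGraph {n : ℕ} (hf : ∀ v, IsLeast {i | v ∈ Bag i} (f v))
    (hinterval : ∀ v, {i | v ∈ Bag i}.OrdConnected) (hcard : ∀ i, (Bag i).card ≤ n) :
    (bagGraph Bag).CliqueFree (n + 1) := by
  rintro S ⟨hS, hScard⟩
  obtain ⟨v, hv, hmax⟩ := S.exists_max_image f (Finset.card_pos.1 (by omega))
  have hSv : S ⊆ Bag (f v) := by
    intro u hu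
    obtain rfl | huv := eq_or_ne u v
    · exact (hf u).1
    · exact mem_bag_of_bagGraph_adj hf hinterval (hS hu hv huv) (hmax u hu)
  have := (Finset.card_le_card hSv).trans (hcard _)
  omega

theorem HasPathDecompOfWidth.hasTreewidthAtMost [DecidableEq V] {G : SimpleGraph V} {w : ℕ}
    (hG : HasPathDecompOfWidth G w) : HasTreewidthAtMost G w := by
  obtain ⟨m, Bag, hcover, hedge, hinterval, hcard⟩ := hG
  have hleast (v : V) : ∃ i, IsLeast {i | v ∈ Bag i} i :=
    (Set.toFinite _).exists_minimal (hcover v) |>.imp fun _ hi => minimal_iff_isLeast.1 hi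
  choose f hf using hleast
  have hconnected (v : V) : {i | v ∈ Bag i}.OrdConnected :=
    ⟨fun i hi l hl j hj => hinterval v i j l hj.1 hj.2 hi hl⟩
  exact ⟨bagGraph Bag, fun u v huv => ⟨huv.ne, hedge u v huv⟩, isChordal_bagGraph hf hconnected,
    cliqueFree_bagGraph hf hconnected hcard⟩

end PathDecomposition

section Greedy

variable {V α : Type*} [Fintype α] {G : SimpleGraph V} {c : V → α} {T : Set V}

lemma exists_forall_mem_ne_of_card_image_lt [DecidableEq α] {A : Finset V}
    (hA : (A.image c).card < Fintype.card α) : ∃ x, ∀ u ∈ A, c u ≠ x := by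
  obtain ⟨x, -, hx⟩ := Finset.exists_mem_notMem_of_card_lt_card (hA.trans_eq Finset.card_univ.symm)
  exact ⟨x, fun u hu hux => hx (Finset.mem_image.2 ⟨u, hu, hux⟩)⟩

-- The vertices of `s` are colored in order of decreasing `f`.
theorem IsProperOn.exists_extend_union (hc : IsProperOn G c T) {s : Finset V} (f : V → ℕ)
    (hsT : Disjoint ↑s T) (hcard : ∀ v ∈ s, ∃ A : Finset V, A.card < Fintype.card α ∧
      ∀ u, G.Adj v u → u ∈ T ∨ f v ≤ f u → u ∈ A) :
    ∃ c' : V → α, Set.EqOn c' c T ∧ IsProperOn G c' (↑s ∪ T) := by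
  classical
  induction s using Finset.induction_on_min_value f with
  | empty => exact ⟨c, Set.eqOn_refl c T, by simpa using hc⟩
  | insert a s has hmin ih =>
    rw [Finset.coe_insert, Set.disjoint_insert_left] at hsT
    obtain ⟨c', hEq, hc'⟩ := ih hsT.2 fun v hv => hcard v (Finset.mem_insert_of_mem hv)
    obtain ⟨A, hA, hmem⟩ := hcard a (Finset.mem_insert_self a s)
    obtain ⟨x, hx⟩ := exists_forall_mem_ne_of_card_image_lt (c := c')
      (Finset.card_image_le.trans_lt hA)
    refine ⟨Function.update c' a x, fun u hu => ?_, ?_⟩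
    · rw [Function.update_of_ne (ne_of_mem_of_not_mem hu hsT.1), hEq hu]
    · rw [Finset.coe_insert, Set.insert_union]
      exact hc'.update_insert (by simp [has, hsT.1]) fun u hu hau =>
        hx u (hmem u hau (hu.symm.imp_right (hmin u)))

lemma exists_adj_dist_lt_of_ne (hG : G.Connected) {v x : V} (hvx : v ≠ x) :
    ∃ u, G.Adj v u ∧ G.dist u x < G.dist v x := by
  obtain ⟨p, hp⟩ := hG.exists_walk_length_eq_dist v x
  cases p with
  | nil => exact (hvx rfl).elim
  | cons h q => exact ⟨_, h, (G.dist_le q).trans_lt (by rw [← hp]; simp)⟩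

variable [Fintype V] [DecidableRel G.Adj]

theorem colorable_of_maxDegree_lt (h : G.maxDegree < Fintype.card α) :
    G.Colorable (Fintype.card α) := by
  obtain ⟨x⟩ : Nonempty α := Fintype.card_pos_iff.1 (Nat.zero_lt_of_lt h)
  have hempty : IsProperOn G (fun _ => x) ∅ := by simp [IsProperOn]
  obtain ⟨c, -, hc⟩ := hempty.exists_extend_union (s := Finset.univ) (fun _ => 0) (by simp)
    fun v _ => ⟨G.neighborFinset v, (G.degree_le_maxDegree v).trans_lt h, by simp⟩
  exact IsProperOn.colorable (by simpa using hc)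

lemma card_erase_neighborFinset_lt [DecidableEq V] {v w : V} {n : ℕ} (hdeg : G.maxDegree ≤ n)
    (hvw : G.Adj v w) : ((G.neighborFinset v).erase w).card < n :=
  (Finset.card_erase_lt_of_mem ((G.mem_neighborFinset v w).2 hvw)).trans_le
    ((G.degree_le_maxDegree v).trans hdeg)

-- The vertices outside `T` are colored by decreasing distance to `x`.
theorem IsProperOn.exists_extend_compl_singleton (hc : IsProperOn G c T)
    (hdeg : G.maxDegree ≤ Fintype.card α) (hconn : (G.induce Tᶜ).Connected) {x : V} (hx : x ∉ T) :
    ∃ c' : V → α, Set.EqOn c' c T ∧ IsProperOn G c' {x}ᶜ := by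
  classical
  let f (v : V) : ℕ := if hv : v ∈ Tᶜ then (G.induce Tᶜ).dist ⟨v, hv⟩ ⟨x, hx⟩ else 0
  have hs : ((Tᶜ.toFinset.erase x : Finset V) : Set V) = Tᶜ \ {x} := by simp
  have hsT : Tᶜ \ {x} ∪ T = {x}ᶜ := by
    ext v
    by_cases hv : v ∈ T
    · simp [hv, ne_of_mem_of_not_mem hv hx]
    · simp [hv]
  rw [← hsT, ← hs]
  refine hc.exists_extend_union f (hs ▸ ?_) fun v hv => ?_
  · exact disjoint_compl_left.mono_left Set.sdiff_subset
  rw [← Finset.mem_coe, hs] at hv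
  obtain ⟨⟨w, hw⟩, hvw, hlt⟩ := exists_adj_dist_lt_of_ne hconn (v := ⟨v, hv.1⟩) (x := ⟨x, hx⟩)
    fun h => hv.2 (congrArg Subtype.val h)
  refine ⟨_, card_erase_neighborFinset_lt hdeg hvw, fun u hvu hu => ?_⟩
  refine Finset.mem_erase.2 ⟨?_, (G.mem_neighborFinset v u).2 hvu⟩
  rintro rfl
  refine hu.elim hw fun hle => hle.not_gt ?_
  simpa only [f, dif_pos hv.1, dif_pos hw] using hlt

lemma IsProperOn.colorable_of_card_image_neighborFinset_lt [DecidableEq α] {x : V}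
    (hc : IsProperOn G c {x}ᶜ) (hx : ((G.neighborFinset x).image c).card < Fintype.card α) :
    G.Colorable (Fintype.card α) := by
  classical
  obtain ⟨y, hy⟩ := exists_forall_mem_ne_of_card_image_lt hx
  have huniv := hc.update_insert (by simp) fun u _ hxu => hy u ((G.mem_neighborFinset x u).2 hxu)
  rw [Set.insert_eq, Set.union_compl_self] at huniv
  exact huniv.colorable

theorem IsProperOn.colorable_of_connected_compl (hc : IsProperOn G c T)
    (hdeg : G.maxDegree ≤ Fintype.card α) (hconn : (G.induce Tᶜ).Connected) {x p q : V}
    (hx : x ∉ T) (hp : p ∈ T) (hq : q ∈ T) (hpq : p ≠ q) (hxp : G.Adj x p) (hxq : G.Adj x q)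
    (hcpq : c p = c q) : G.Colorable (Fintype.card α) := by
  classical
  obtain ⟨c', hEq, hc'⟩ := hc.exists_extend_compl_singleton hdeg hconn hx
  have hrepeat : (G.neighborFinset x).image c' = ((G.neighborFinset x).erase p).image c' := by
    refine Finset.Subset.antisymm (fun z hz => ?_)
      (Finset.image_subset_image (Finset.erase_subset ..))
    obtain ⟨u, hu, rfl⟩ := Finset.mem_image.1 hz
    obtain rfl | hup := eq_or_ne u p
    · rw [hEq hp, hcpq, ← hEq hq]
      exact Finset.mem_image_of_mem c' (by simp [hpq.symm, hxq])
    · exact Finset.mem_image_of_mem c' (Finset.mem_erase.2 ⟨hup, hu⟩)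
  exact hc'.colorable_of_card_image_neighborFinset_lt <| hrepeat ▸
    Finset.card_image_le.trans_lt (card_erase_neighborFinset_lt hdeg hxp)

end Greedy

section Cycles

variable {V : Type*} {G : SimpleGraph V}

open SimpleGraph

lemma setOf_mem_support_cons {u v w : V} (h : G.Adj u v) (p : G.Walk v w) :
    {x | x ∈ (Walk.cons h p).support} = insert u {x | x ∈ p.support} := by
  ext x
  simp

lemma connected_induce_support_sdiff_start {u v : V} {p : G.Walk u v} (hp : p.IsPath)
    (huv : u ≠ v) : (G.induce ({w | w ∈ p.support} \ {u})).Connected := by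
  cases p with
  | nil => exact (huv rfl).elim
  | cons h q =>
    have hu : u ∉ {x | x ∈ q.support} := ((Walk.cons_isPath_iff h q).1 hp).2
    rw [setOf_mem_support_cons, Set.insert_sdiff_self_of_notMem hu]
    exact q.connected_induce_support

lemma connected_induce_support_sdiff_end {u v : V} {p : G.Walk u v} (hp : p.IsPath)
    (huv : u ≠ v) : (G.induce ({w | w ∈ p.support} \ {v})).Connected := by
  have hreverse : {w | w ∈ p.support} = {w | w ∈ p.reverse.support} := by simp
  exact hreverse ▸ connected_induce_support_sdiff_start hp.reverse huv.symm

lemma connected_induce_support_sdiff_pair {u v : V} {p : G.Walk u v} (hp : p.IsPath)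
    (huv : u ≠ v) (hnadj : ¬ G.Adj u v) :
    (G.induce ({w | w ∈ p.support} \ {u, v})).Connected := by
  cases p with
  | nil => exact (huv rfl).elim
  | cons h q =>
    obtain ⟨hq, hu⟩ : q.IsPath ∧ u ∉ {x | x ∈ q.support} := (Walk.cons_isPath_iff h q).1 hp
    rw [setOf_mem_support_cons, ← Set.singleton_union (s := {v}), ← Set.sdiff_sdiff,
      Set.insert_sdiff_self_of_notMem hu]
    exact connected_induce_support_sdiff_end hq fun hv => hnadj (hv ▸ h)

lemma connected_induce_insert_support_sdiff_pair {u v a z : V} {p : G.Walk u v} (hp : p.IsPath)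
    (huv : u ≠ v) (hnadj : ¬ G.Adj u v) (hz : z ∈ p.support) (hzuv : z ∉ ({u, v} : Set V))
    (haz : G.Adj a z) : (G.induce (insert a ({w | w ∈ p.support} \ {u, v}))).Connected := by
  rw [Set.insert_eq]
  exact connected_induce_union .of_subsingleton
    (connected_induce_support_sdiff_pair hp huv hnadj).preconnected (Set.mem_singleton a)
    ⟨hz, hzuv⟩ haz

lemma connected_induce_support_sdiff_of_isCycle {v y : V} {p : G.Walk v v} (hp : p.IsCycle)
    (hy : y ∈ p.support) : (G.induce ({w | w ∈ p.support} \ {y})).Connected := by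
  classical
  have hrotate := hp.rotate hy
  have hsupport : {w | w ∈ p.support} = {w | w ∈ (p.rotate y hy).support} := by simp
  rw [hsupport]
  cases hq : p.rotate y hy with
  | nil => exact (hrotate.not_nil (hq ▸ .nil)).elim
  | cons h q =>
    rw [hq, Walk.cons_isCycle_iff] at hrotate
    rw [setOf_mem_support_cons, Set.insert_sdiff_of_mem _ (Set.mem_singleton y)]
    exact connected_induce_support_sdiff_end hrotate.1 h.ne'

lemma exists_eq_cons_cons_of_isCycle {v : V} {p : G.Walk v v} (hp : p.IsCycle) :
    ∃ (a b : V) (hva : G.Adj v a) (hab : G.Adj a b) (q : G.Walk b v),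
      p = .cons hva (.cons hab q) ∧ q.IsPath ∧ b ≠ v := by
  cases p with
  | nil => exact (hp.not_nil .nil).elim
  | cons hva r =>
    cases r with
    | nil => exact (hva.ne rfl).elim
    | cons hab q =>
      obtain ⟨hr, hedge⟩ := (Walk.cons_isCycle_iff _ hva).1 hp
      refine ⟨_, _, hva, hab, q, rfl, ((Walk.cons_isPath_iff hab q).1 hr).1, ?_⟩
      rintro rfl
      exact hedge (by simp [Sym2.eq_swap])

theorem exists_isCycle_forall_adj_mem_support [Fintype V] [Nonempty V] [DecidableRel G.Adj]
    (hdeg : ∀ v, 2 ≤ G.degree v) :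
    ∃ (v : V) (p : G.Walk v v), p.IsCycle ∧ ∀ w, G.Adj v w → w ∈ p.support := by
  classical
  obtain ⟨u, v, p, hp, hmax⟩ := Walk.exists_isPath_forall_isPath_length_le_length G
  have hsupport : ∀ w ∈ G.neighborFinset v, w ∈ p.support := by
    intro w hw
    by_contra hwp
    have := hmax _ _ _ (hp.concat hwp ((G.mem_neighborFinset v w).1 hw))
    simp at this
  obtain ⟨w, hw⟩ : (G.neighborFinset v).Nonempty :=
    Finset.card_pos.1 ((hdeg v).trans_lt' two_pos)
  obtain ⟨x, hx, hxp, hfirst⟩ := p.exists_mem_support_forall_mem_support_imp_eq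
    (G.neighborFinset v) ⟨w, Finset.mem_filter.2 ⟨hw, hsupport w hw⟩⟩
  let q := p.dropUntil x hxp
  have hq : ∀ w ∈ G.neighborFinset v, w ∈ q.support := by
    intro w hw
    have hwp := hsupport w hw
    rw [← p.take_spec hxp, Walk.mem_support_append_iff] at hwp
    refine hwp.elim (fun h => ?_) id
    exact hfirst w hw h ▸ q.start_mem_support
  have hcard : (insert v (G.neighborFinset v)).card ≤ q.support.length :=
    (Finset.card_le_card fun w hw => List.mem_toFinset.2 <|
      (Finset.mem_insert.1 hw).elim (fun h => h ▸ q.end_mem_support) (hq w)).trans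
        (List.toFinset_card_le _)
  rw [Finset.card_insert_of_notMem (by simp), q.length_support, G.card_neighborFinset_eq_degree]
    at hcard
  have hvx : G.Adj v x := (G.mem_neighborFinset v x).1 hx
  have hlength : 3 ≤ (Walk.cons hvx q).length := by
    rw [Walk.length_cons]
    grind [hdeg v]
  refine ⟨v, .cons hvx q, ?_, fun w hvw =>
    List.mem_cons_of_mem v (hq w ((G.mem_neighborFinset v w).2 hvw))⟩
  exact Walk.isCycle_iff_isPath_tail_and_le_length.2
    ⟨by simpa using hp.dropUntil hxp, hlength⟩

end Cycles

section Brooks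

open SimpleGraph

variable {V α : Type*} [Fintype V] [Fintype α] {G : SimpleGraph V} [DecidableRel G.Adj]
  {c : V → α}

lemma IsProperOn.colorable_of_connected_sdiff_singleton {C : Set V} (hc : IsProperOn G c Cᶜ)
    (hdeg : G.maxDegree ≤ Fintype.card α) {x p q : V} (hx : x ∈ C) (hp : p ∈ C) (hq : q ∉ C)
    (hpC : ∀ u, G.Adj p u → u ∈ C) (hxp : G.Adj x p) (hxq : G.Adj x q)
    (hconn : (G.induce (C \ {p})).Connected) : G.Colorable (Fintype.card α) := by
  classical
  have hqp : q ≠ p := (ne_of_mem_of_not_mem hp hq).symm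
  have hc' := hc.update_insert (v := p) (x := c q) (by simpa) fun u hu hpu => (hu (hpC u hpu)).elim
  have hcompl : (insert p Cᶜ)ᶜ = C \ {p} := by
    rw [Set.insert_eq, Set.compl_union, compl_compl, Set.inter_comm, Set.sdiff_eq]
  refine hc'.colorable_of_connected_compl hdeg (hcompl ▸ hconn) (p := p) (q := q) ?_
    (Set.mem_insert p _) (Set.mem_insert_of_mem p hq) hqp.symm hxp hxq ?_
  · simpa [hx] using hxp.ne
  · rw [Function.update_self, Function.update_of_ne hqp]

-- On the way from `v` to `s` along the cycle, some `y` without neighbors off the cycle is followed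
-- by some `x` with such a neighbor `u`, and `y` may be given the color of `u`.
lemma IsProperOn.colorable_of_isCycle_of_adj_notMem_support {v s t : V} {p : G.Walk v v}
    (hp : p.IsCycle) (hc : IsProperOn G c {w | w ∈ p.support}ᶜ)
    (hdeg : G.maxDegree ≤ Fintype.card α) (hv : ∀ w, G.Adj v w → w ∈ p.support)
    (hs : s ∈ p.support) (ht : t ∉ p.support) (hst : G.Adj s t) : G.Colorable (Fintype.card α) := by
  classical
  obtain ⟨⟨⟨y, x⟩, hyx⟩, hd, hy, hx⟩ := (p.takeUntil s hs).exists_boundary_dart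
    {w | ∀ u, G.Adj w u → u ∈ p.support} hv fun h => ht (h t hst)
  have hyp : y ∈ p.support :=
    p.support_takeUntil_subset_support hs (Walk.dart_fst_mem_support_of_mem_darts _ hd)
  have hxp : x ∈ p.support :=
    p.support_takeUntil_subset_support hs (Walk.dart_snd_mem_support_of_mem_darts _ hd)
  obtain ⟨u, hxu, hu⟩ : ∃ u, G.Adj x u ∧ u ∉ p.support := by simpa using hx
  exact hc.colorable_of_connected_sdiff_singleton hdeg hxp hyp hu hy hyx.symm hxu
    (connected_induce_support_sdiff_of_isCycle hp hyp)

-- Two vertices `v`, `b` at distance two on the cycle receive the same color; their common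
-- neighbor `a` on the cycle is joined to the rest of it by its third edge.
lemma IsProperOn.colorable_of_isCycle_of_forall_adj_mem_support {v : V} {p : G.Walk v v}
    (hp : p.IsCycle) (hc : IsProperOn G c {w | w ∈ p.support}ᶜ) (hG : G.CliqueFree 3)
    (hmax : G.maxDegree ≤ Fintype.card α) (hmin : ∀ v, 3 ≤ G.degree v)
    (hclosed : ∀ w ∈ p.support, ∀ u, G.Adj w u → u ∈ p.support) :
    G.Colorable (Fintype.card α) := by
  classical
  obtain ⟨a, b, hva, hab, q, rfl, hq, hbv⟩ := exists_eq_cons_cons_of_isCycle hp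
  have hnadj : ¬ G.Adj b v := fun hbv => hG {v, a, b} (is3Clique_triple_iff.2 ⟨hva, hbv.symm, hab⟩)
  have hsupport :
      {w | w ∈ (Walk.cons hva (.cons hab q)).support} = insert a {w | w ∈ q.support} := by
    simp only [setOf_mem_support_cons]
    rw [Set.insert_comm, Set.insert_eq_of_mem (a := v) q.end_mem_support]
  replace hclosed : ∀ w ∈ insert a {w | w ∈ q.support}, ∀ u, G.Adj w u →
      u ∈ insert a {w | w ∈ q.support} := by
    rwa [← hsupport]
  rw [hsupport] at hc
  have hvC : v ∈ insert a {w | w ∈ q.support} := Or.inr q.end_mem_support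
  have hbC : b ∈ insert a {w | w ∈ q.support} := Or.inr q.start_mem_support
  obtain ⟨z, haz, hz⟩ : ∃ z ∈ G.neighborFinset a, z ∉ ({b, v} : Finset V) :=
    Finset.exists_mem_notMem_of_card_lt_card (Finset.card_le_two.trans_lt (hmin a))
  rw [mem_neighborFinset] at haz
  have hzq : z ∈ q.support := (hclosed a (Set.mem_insert ..) z haz).resolve_left haz.ne'
  have hconn := connected_induce_insert_support_sdiff_pair hq hbv hnadj hzq (by simpa using hz) haz
  rw [← Set.insert_sdiff_of_notMem _ (by simp [hab.ne, hva.ne']), Set.pair_comm,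
    ← Set.singleton_union (s := {b}), ← Set.sdiff_sdiff] at hconn
  exact (hc.compl_sdiff_singleton hvC (hclosed v hvC)).colorable_of_connected_sdiff_singleton
    hmax (x := a) (p := b) (q := v) ⟨Set.mem_insert .., hva.ne'⟩ ⟨hbC, hbv⟩ (by simp)
    (fun u hbu => ⟨hclosed b hbC u hbu, fun huv => hnadj (huv ▸ hbu)⟩) hab hva.symm hconn

theorem colorable_of_forall_ne_univ_exists_isProperOn [Nonempty V] (hG : G.CliqueFree 3)
    (hmax : G.maxDegree ≤ Fintype.card α) (hmin : ∀ v, 3 ≤ G.degree v)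
    (hsub : ∀ T : Set V, T ≠ Set.univ → ∃ c : V → α, IsProperOn G c T) :
    G.Colorable (Fintype.card α) := by
  obtain ⟨v, p, hp, hv⟩ := exists_isCycle_forall_adj_mem_support fun v =>
    (hmin v).trans' (Nat.le_succ 2)
  have hne : {w | w ∈ p.support}ᶜ ≠ Set.univ :=
    (Set.ne_univ_iff_exists_notMem _).2 ⟨v, not_not.2 p.start_mem_support⟩
  obtain ⟨c, hc⟩ := hsub _ hne
  by_cases hclosed : ∀ w ∈ p.support, ∀ u, G.Adj w u → u ∈ p.support
  · exact hc.colorable_of_isCycle_of_forall_adj_mem_support hp hG hmax hmin hclosed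
  · push Not at hclosed
    obtain ⟨s, hs, t, hst, ht⟩ := hclosed
    exact hc.colorable_of_isCycle_of_adj_notMem_support hp hmax hv hs ht hst

/-- **Brooks' theorem** for triangle-free graphs. -/
theorem colorable_of_cliqueFree_three_of_maxDegree_le {k : ℕ} (hG : G.CliqueFree 3) (hk : 3 ≤ k)
    (hdeg : G.maxDegree ≤ k) : G.Colorable k := by
  classical
  induction hn : Fintype.card V using Nat.strong_induction_on generalizing V with
  | h n ih =>
  subst hn
  have : NeZero k := ⟨by omega⟩
  have hsub (T : Set V) (hT : T ≠ Set.univ) : ∃ c : V → Fin k, IsProperOn G c T := by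
    obtain ⟨v, hv⟩ := (Set.ne_univ_iff_exists_notMem T).1 hT
    have hcontained : G.induce T ⊑ G := ⟨(Embedding.induce T).toCopy⟩
    obtain ⟨C⟩ := ih _ (Fintype.card_subtype_lt hv) (hG.comap hcontained)
      (hcontained.maxDegree_mono.trans hdeg) rfl
    exact exists_isProperOn_of_coloring_induce C
  by_cases hmin : ∀ v, 3 ≤ G.degree v
  · cases isEmpty_or_nonempty V
    · exact .of_isEmpty k
    · simpa using colorable_of_forall_ne_univ_exists_isProperOn (α := Fin k) hG (by simpa) hmin hsub
  · push Not at hmin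
    obtain ⟨v, hv⟩ := hmin
    obtain ⟨c, hc⟩ := hsub {v}ᶜ (by simp)
    simpa using hc.colorable_of_card_image_neighborFinset_lt
      (Finset.card_image_le.trans_lt (by simpa using hv.trans_le hk))

end Brooks

theorem stmt_8_general {V : Type*} [Fintype V] (G : SimpleGraph V) [DecidableRel G.Adj]
    (htf : G.CliqueFree 3) (htw : HasTreewidthAtMost G 5) :
    G.chromaticNumber ≤ ((G.maxDegree + 4) / 2 : ℕ) := by
  apply SimpleGraph.Colorable.chromaticNumber_le
  obtain hlow | hmid | hhigh : G.maxDegree < 2 ∨ (2 ≤ G.maxDegree ∧ G.maxDegree ≤ 3) ∨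
    4 ≤ G.maxDegree := by omega
  · have htwo : G.Colorable 2 := by
      simpa using colorable_of_maxDegree_lt (α := Fin 2) (by simpa using hlow)
    exact htwo.mono (by omega)
  · exact (colorable_of_cliqueFree_three_of_maxDegree_le htf le_rfl hmid.2).mono (by omega)
  · exact (htw.colorable htf).mono (by omega)

/-- **Reed's conjecture for triangle-free graphs holds on graphs of pathwidth at most 5.**
Every finite simple triangle-free graph admitting a path decomposition of width at most 5
satisfies `χ(G) ≤ ⌈(Δ(G) + 3) / 2⌉`.  (For a natural number `Δ`,
`⌈(Δ + 3) / 2⌉ = (Δ + 4) / 2` with natural-number division.) -/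
theorem stmt_8 {V : Type*} [Fintype V] [DecidableEq V] (G : SimpleGraph V)
    [DecidableRel G.Adj] (htf : G.CliqueFree 3) (hpw : HasPathDecompOfWidth G 5) :
    G.chromaticNumber ≤ ((G.maxDegree + 4) / 2 : ℕ) :=
  stmt_8_general G htf hpw.hasTreewidthAtMost
end

section
/- There exists a finite simple triangle-free graph with exactly 14 vertices and 27 edges that has chromatic number 4, admits a path decomposition of width at most 4, and admits no path decomposition of width at most 3 (i.e., it has pathwidth exactly 4). -/
/-!
For the lower bound on pathwidth, let `u` and `v` be the first two vertices to disappear from the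
bags of a path decomposition of width `w`. The last bag containing `v` contains every vertex of
`N[u] ∪ N[v]` other than `u`, so `|N[u] ∪ N[v]| ≤ w + 2`. In a triangle-free graph of minimum degree
`δ` without twins, two adjacent vertices have disjoint neighbourhoods and two nonadjacent ones have
distinct neighbourhoods, whence `|N[u] ∪ N[v]| ≥ min (2δ) (δ + 3)`; for `δ ≥ 3` this gives `w > δ`.
The witness below satisfies these hypotheses with `δ = 3`.
-/

open Finset

section Pathwidth

theorem exists_card_eq_forall_mem_forall_notMem_le {ι α : Type*} [Fintype ι] [LinearOrder α]
    (f : ι → α) {k : ℕ} (hk : k ≤ Fintype.card ι) :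
    ∃ S : Finset ι, #S = k ∧ ∀ i ∈ S, ∀ j ∉ S, f i ≤ f j := by
  classical
  induction k with
  | zero => exact ⟨∅, by simp⟩
  | succ k ih =>
    obtain ⟨S, hcard, hS⟩ := ih (by omega)
    have hne : Sᶜ.Nonempty := by rw [← card_pos, card_compl]; omega
    obtain ⟨x, hx, hmin⟩ := exists_min_image Sᶜ f hne
    rw [mem_compl] at hx
    refine ⟨insert x S, by rw [card_insert_of_notMem hx, hcard], fun i hi j hj ↦ ?_⟩
    rw [mem_insert, not_or] at hj
    obtain rfl | hi := mem_insert.1 hi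
    · exact hmin j (mem_compl.2 hj.2)
    · exact hS i hi j hj.2

theorem disjoint_neighborSet_of_adj {V : Type*} {G : SimpleGraph V} {u v : V}
    (hG : G.CliqueFree 3) (huv : G.Adj u v) : Disjoint (G.neighborSet u) (G.neighborSet v) := by
  classical
  exact Set.disjoint_left.2 fun x hux hvx ↦
    hG {u, v, x} (SimpleGraph.is3Clique_triple_iff.2 ⟨huv, hux, hvx⟩)

variable {V : Type*} [Fintype V] [DecidableEq V] {G : SimpleGraph V} [DecidableRel G.Adj]
  {u v : V} {w : ℕ}

variable (G) in
/-- The closed neighbourhood `N[S]` of a set of vertices: `S` together with all the neighbours of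
its elements. -/
def closedNeighborFinset (S : Finset V) : Finset V :=
  S ∪ S.biUnion fun v ↦ G.neighborFinset v

theorem closedNeighborFinset_pair :
    closedNeighborFinset G {u, v} = {u, v} ∪ (G.neighborFinset u ∪ G.neighborFinset v) := by
  simp [closedNeighborFinset]

theorem HasPathDecompOfWidth.exists_card_closedNeighborFinset_le (h : HasPathDecompOfWidth G w)
    {k : ℕ} (hk : k ≤ Fintype.card V) :
    ∃ S : Finset V, #S = k ∧ #(closedNeighborFinset G S) ≤ w + k := by
  obtain ⟨m, Bag, hvertex, hedge, hconvex, hwidth⟩ := h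
  have hlast (v : V) : ∃ i, v ∈ Bag i ∧ ∀ j, v ∈ Bag j → j ≤ i := by
    obtain ⟨i, hi⟩ := hvertex v
    simpa using exists_max_image {i | v ∈ Bag i} id ⟨i, by simpa using hi⟩
  choose last mem_last le_last using hlast
  obtain ⟨S, rfl, hS⟩ := exists_card_eq_forall_mem_forall_notMem_le last hk
  refine ⟨S, rfl, ?_⟩
  obtain rfl | hne := S.eq_empty_or_nonempty
  · simp [closedNeighborFinset]
  obtain ⟨v, hv, hmax⟩ := exists_max_image S last hne
  have hbag : closedNeighborFinset G S \ S.erase v ⊆ Bag (last v) := by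
    intro x hx
    simp only [closedNeighborFinset, mem_sdiff, mem_union, mem_biUnion,
      SimpleGraph.mem_neighborFinset, mem_erase, not_and_or, not_not] at hx
    obtain ⟨hxN, rfl | hxS⟩ := hx
    · exact mem_last x
    obtain ⟨u, hu, hux⟩ := hxN.resolve_left hxS
    obtain ⟨i, hui, hxi⟩ := hedge u x hux
    exact hconvex x i (last v) (last x) ((le_last u i hui).trans (hmax u hu)) (hS v hv x hxS)
      hxi (mem_last x)
  calc
    #(closedNeighborFinset G S) ≤ #(closedNeighborFinset G S \ S.erase v) + #(S.erase v) :=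
      card_le_card_sdiff_add_card
    _ ≤ (w + 1) + #(S.erase v) := by gcongr; exact (card_le_card hbag).trans (hwidth _)
    _ = w + #S := by rw [add_assoc, add_comm 1, card_erase_add_one hv]

theorem two_mul_minDegree_le_card_closedNeighborFinset_pair (hG : G.CliqueFree 3)
    (huv : G.Adj u v) : 2 * G.minDegree ≤ #(closedNeighborFinset G {u, v}) := by
  calc
    2 * G.minDegree ≤ G.degree u + G.degree v := by
      linarith [G.minDegree_le_degree u, G.minDegree_le_degree v]
    _ = #(G.neighborFinset u ∪ G.neighborFinset v) :=
      (card_union_of_disjoint (Set.disjoint_toFinset.2 (disjoint_neighborSet_of_adj hG huv))).symm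
    _ ≤ #(closedNeighborFinset G {u, v}) := by
      rw [closedNeighborFinset_pair]
      exact card_le_card subset_union_right

theorem minDegree_lt_card_union_neighborFinset (h : G.neighborFinset u ≠ G.neighborFinset v) :
    G.minDegree < #(G.neighborFinset u ∪ G.neighborFinset v) := by
  by_contra! hle
  have hu : G.neighborFinset u = G.neighborFinset u ∪ G.neighborFinset v :=
    eq_of_subset_of_card_le subset_union_left (hle.trans (G.minDegree_le_degree u))
  have hv : G.neighborFinset v = G.neighborFinset u ∪ G.neighborFinset v :=
    eq_of_subset_of_card_le subset_union_right (hle.trans (G.minDegree_le_degree v))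
  exact h (hu.trans hv.symm)

theorem minDegree_add_three_le_card_closedNeighborFinset_pair (hne : u ≠ v) (huv : ¬ G.Adj u v)
    (h : G.neighborFinset u ≠ G.neighborFinset v) :
    G.minDegree + 3 ≤ #(closedNeighborFinset G {u, v}) := by
  have hdisj : Disjoint {u, v} (G.neighborFinset u ∪ G.neighborFinset v) := by
    simp [huv, G.adj_comm v u]
  calc
    G.minDegree + 3 ≤ #{u, v} + #(G.neighborFinset u ∪ G.neighborFinset v) := by
      linarith [card_pair hne, minDegree_lt_card_union_neighborFinset h]
    _ = #(closedNeighborFinset G {u, v}) := by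
      rw [closedNeighborFinset_pair, card_union_of_disjoint hdisj]

theorem HasPathDecompOfWidth.minDegree_lt (h : HasPathDecompOfWidth G w) (hG : G.CliqueFree 3)
    (hinj : Function.Injective fun v ↦ G.neighborFinset v) (hδ : 3 ≤ G.minDegree) :
    G.minDegree < w := by
  have : Nontrivial V := by
    by_contra! _
    simp at hδ
  obtain ⟨S, hcard, hS⟩ :=
    h.exists_card_closedNeighborFinset_le (Fintype.one_lt_card : 2 ≤ Fintype.card V)
  obtain ⟨u, v, hne, rfl⟩ := card_eq_two.1 hcard
  by_cases huv : G.Adj u v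
  · have := two_mul_minDegree_le_card_closedNeighborFinset_pair hG huv
    omega
  · have := minDegree_add_three_le_card_closedNeighborFinset_pair hne huv (hinj.ne hne)
    omega

end Pathwidth

theorem eq_of_ne_of_ne_fin_three {a b c d : Fin 3} (hab : a ≠ b) (hca : c ≠ a) (hcb : c ≠ b)
    (hda : d ≠ a) (hdb : d ≠ b) : c = d := by
  omega

/-- The edges of `witnessGraph`. -/
def witnessEdges : Finset (Sym2 (Fin 14)) :=
  {s(0, 2), s(0, 3), s(0, 4), s(1, 3), s(1, 4), s(1, 8), s(1, 9), s(1, 12), s(1, 13),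
    s(2, 6), s(2, 8), s(2, 10), s(2, 11), s(2, 13), s(3, 5), s(4, 6), s(4, 7), s(5, 6),
    s(5, 7), s(5, 8), s(5, 9), s(7, 10), s(7, 12), s(7, 13), s(9, 10), s(9, 11), s(11, 12)}

/-- A triangle-free graph with 14 vertices and 27 edges, of chromatic number 4 and pathwidth 4.
The vertices are numbered in the order in which they enter the bags of a path decomposition. -/
abbrev witnessGraph : SimpleGraph (Fin 14) :=
  SimpleGraph.fromEdgeSet witnessEdges

namespace witnessGraph

theorem ncard_edgeSet : witnessGraph.edgeSet.ncard = 27 := by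
  have hdiag : Disjoint (witnessEdges : Set (Sym2 (Fin 14))) Sym2.diagSet :=
    Set.disjoint_left.2 (by decide +kernel)
  rw [SimpleGraph.edgeSet_fromEdgeSet, hdiag.sdiff_eq_left, Set.ncard_coe_finset]
  rfl

theorem cliqueFree_three : witnessGraph.CliqueFree 3 := by
  have no_triangle : ∀ a b c, witnessGraph.Adj a b → witnessGraph.Adj a c →
      ¬ witnessGraph.Adj b c := by
    decide +kernel
  intro s hs
  obtain ⟨a, b, c, hab, hac, hbc, -⟩ := SimpleGraph.is3Clique_iff.1 hs
  exact no_triangle a b c hab hac hbc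

theorem minDegree_eq_three : witnessGraph.minDegree = 3 := by
  decide +kernel

theorem neighborFinset_injective : Function.Injective fun v ↦ witnessGraph.neighborFinset v := by
  decide +kernel

theorem hasPathDecompOfWidth_four : HasPathDecompOfWidth witnessGraph 4 := by
  refine ⟨10, ![{0, 1, 2, 3, 4}, {1, 2, 3, 4, 5}, {1, 2, 4, 5, 6}, {1, 2, 4, 5, 7},
    {1, 2, 5, 7, 8}, {1, 2, 5, 7, 9}, {1, 2, 7, 9, 10}, {1, 2, 7, 9, 11}, {1, 2, 7, 11, 12},
    {1, 2, 7, 12, 13}], ?_⟩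
  decide +kernel

theorem not_hasPathDecompOfWidth_three : ¬ HasPathDecompOfWidth witnessGraph 3 := fun h ↦
  (h.minDegree_lt cliqueFree_three neighborFinset_injective minDegree_eq_three.ge).ne
    minDegree_eq_three

theorem colorable_four : witnessGraph.Colorable 4 :=
  ⟨.mk ![0, 0, 1, 1, 1, 0, 2, 2, 2, 1, 0, 0, 1, 3] (by decide +kernel)⟩

theorem color_ne {α : Type*} (C : witnessGraph.Coloring α) (u v : Fin 14)
    (huv : witnessGraph.Adj u v := by decide) : C u ≠ C v :=
  C.valid huv

theorem color_one_eq_color_two (C : witnessGraph.Coloring (Fin 3)) : C 1 = C 2 := by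
  by_contra h1_2
  have h5 : C 5 = C 1 ∨ C 5 = C 2 := by
    by_contra! ⟨h5_1, h5_2⟩
    have h8_5 : C 8 = C 5 :=
      eq_of_ne_of_ne_fin_three h1_2 (color_ne C 8 1) (color_ne C 8 2) h5_1 h5_2
    exact absurd h8_5 (color_ne C 8 5)
  have h7 : C 7 = C 1 ∨ C 7 = C 2 := by
    by_contra! ⟨h7_1, h7_2⟩
    have h13_7 : C 13 = C 7 :=
      eq_of_ne_of_ne_fin_three h1_2 (color_ne C 13 1) (color_ne C 13 2) h7_1 h7_2
    exact absurd h13_7 (color_ne C 13 7)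
  obtain h5_1 | h5_2 := h5
  · have h7_2 : C 7 = C 2 := h7.resolve_left (h5_1 ▸ color_ne C 7 5)
    have h4_6 : C 4 = C 6 :=
      eq_of_ne_of_ne_fin_three h1_2 (color_ne C 4 1) (h7_2 ▸ color_ne C 4 7)
        (h5_1 ▸ color_ne C 6 5) (color_ne C 6 2)
    exact absurd h4_6 (color_ne C 4 6)
  · have h7_1 : C 7 = C 1 := h7.resolve_right (h5_2 ▸ color_ne C 7 5)
    have h9_10 : C 9 = C 10 :=
      eq_of_ne_of_ne_fin_three h1_2 (color_ne C 9 1) (h5_2 ▸ color_ne C 9 5)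
        (h7_1 ▸ color_ne C 10 7) (color_ne C 10 2)
    exact absurd h9_10 (color_ne C 9 10)

theorem color_one_ne_color_two (C : witnessGraph.Coloring (Fin 3)) : C 1 ≠ C 2 := by
  intro h1_2
  have h3_4 : C 3 = C 4 :=
    eq_of_ne_of_ne_fin_three (h1_2 ▸ color_ne C 0 2 : C 0 ≠ C 1) (color_ne C 3 0) (color_ne C 3 1)
      (color_ne C 4 0) (color_ne C 4 1)
  have h5_1 : C 5 = C 1 :=
    eq_of_ne_of_ne_fin_three (color_ne C 6 4) (color_ne C 5 6) (h3_4 ▸ color_ne C 5 3)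
      (h1_2 ▸ color_ne C 2 6) (color_ne C 1 4)
  have h7_1 : C 7 ≠ C 1 := h5_1 ▸ color_ne C 7 5
  have h11_7 : C 11 = C 7 :=
    eq_of_ne_of_ne_fin_three (color_ne C 1 12) (h1_2 ▸ color_ne C 11 2) (color_ne C 11 12) h7_1
      (color_ne C 7 12)
  have h10_9 : C 10 = C 9 :=
    eq_of_ne_of_ne_fin_three h7_1 (color_ne C 10 7) (h1_2 ▸ color_ne C 10 2)
      (h11_7 ▸ color_ne C 9 11) (color_ne C 9 1)
  exact absurd h10_9 (color_ne C 10 9)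

theorem chromaticNumber_eq_four : witnessGraph.chromaticNumber = 4 :=
  SimpleGraph.chromaticNumber_eq_iff_colorable_not_colorable.2
    ⟨colorable_four, fun ⟨C⟩ ↦ color_one_ne_color_two C (color_one_eq_color_two C)⟩

end witnessGraph

/-- There exists a finite simple triangle-free graph with exactly 14 vertices and
27 edges that has chromatic number 4, admits a path decomposition of width at most 4,
and admits no path decomposition of width at most 3 (i.e., it has pathwidth exactly 4). -/
theorem stmt_12 :
    ∃ G : SimpleGraph (Fin 14),
      G.edgeSet.ncard = 27 ∧ G.CliqueFree 3 ∧ G.chromaticNumber = 4 ∧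
      HasPathDecompOfWidth G 4 ∧ ¬ HasPathDecompOfWidth G 3 :=
  ⟨witnessGraph, witnessGraph.ncard_edgeSet, witnessGraph.cliqueFree_three,
    witnessGraph.chromaticNumber_eq_four, witnessGraph.hasPathDecompOfWidth_four,
    witnessGraph.not_hasPathDecompOfWidth_three⟩
end

section
/- There exists a finite simple triangle-free graph with exactly 22 vertices that has maximum degree 4, chromatic number 4, admits a path decomposition of width at most 4, and admits no path decomposition of width at most 3 (i.e., it has pathwidth exactly 4). -/
/-!
The graph consists of two copies of an 11-vertex gadget with two terminals `0` and `1` that receive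
different colors in every proper 3-coloring; each terminal of one copy is joined to each terminal of
the other. In a 3-coloring the four terminals would need four colors.

The pathwidth is at least 4 because the gadget has a `K₅` minor. In a path decomposition, the bags
meeting a fixed connected set of vertices form an interval, and the intervals of two adjacent
connected sets intersect; by the Helly property of intervals a single bag meets all five branch
sets.
-/

theorem ncard_neighborSet_eq_degree {V : Type*} (G : SimpleGraph V) (v : V)
    [Fintype (G.neighborSet v)] : (G.neighborSet v).ncard = G.degree v := by
  rw [Set.ncard_eq_toFinset_card', SimpleGraph.degree, SimpleGraph.neighborFinset]

/-- `Bag` is a path decomposition of `G`, with bags of any size indexed by an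
arbitrary linear order. -/
structure IsPathDecomposition {V ι : Type*} [LinearOrder ι] (G : SimpleGraph V)
    (Bag : ι → Finset V) : Prop where
  exists_mem (v : V) : ∃ i, v ∈ Bag i
  exists_mem_of_adj {u v : V} : G.Adj u v → ∃ i, u ∈ Bag i ∧ v ∈ Bag i
  ordConnected (v : V) : {i | v ∈ Bag i}.OrdConnected

/-- The sets `B k` are the branch sets of a complete minor of `G` whose vertices are the indices
`k`. -/
structure IsCompleteMinorModel {V κ : Type*} (G : SimpleGraph V) (B : κ → Set V) : Prop where
  connected (k : κ) : (G.induce (B k)).Connected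
  disjoint : Pairwise fun k l => Disjoint (B k) (B l)
  exists_adj : Pairwise fun k l => ∃ u ∈ B k, ∃ v ∈ B l, G.Adj u v

section PathDecomposition

theorem nonempty_iInter_of_ordConnected {α κ : Type*} [LinearOrder α] [Finite κ] [Nonempty κ]
    {S : κ → Set α} (hS : ∀ k, (S k).OrdConnected) (hpair : ∀ k l, (S k ∩ S l).Nonempty) :
    (⋂ k, S k).Nonempty := by
  choose x hx using hpair
  choose first hfirst using fun k => Finite.exists_min (x k)
  -- Going through the sets by increasing `x k (first k)`, all have been entered at the last of
  -- these points, and none has been left, since the last set still has to meet it.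
  obtain ⟨last, hlast⟩ := Finite.exists_max fun k => x k (first k)
  exact ⟨x last (first last), Set.mem_iInter.mpr fun k =>
    (hS k).out (hx k (first k)).1 (hx last k).2 ⟨hlast k, hfirst last k⟩⟩

variable {V ι κ : Type*} [LinearOrder ι] {G : SimpleGraph V} {Bag : ι → Finset V}

theorem IsPathDecomposition.ordConnected_meeting (h : IsPathDecomposition G Bag) {S : Set V}
    (hS : (G.induce S).Preconnected) : {i | ∃ v ∈ S, v ∈ Bag i}.OrdConnected := by
  refine Set.ordConnected_def.mpr ?_
  rintro i ⟨u, huS, hui⟩ l ⟨v, hvS, hvl⟩ j ⟨hij, hjl⟩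
  let early : Set S := {w | ∃ i ≤ j, ↑w ∈ Bag i}
  by_cases hv : ⟨v, hvS⟩ ∈ early
  · obtain ⟨i', hi'j, hvi'⟩ := hv
    exact ⟨v, hvS, (h.ordConnected v).out hvi' hvl ⟨hi'j, hjl⟩⟩
  · obtain ⟨p⟩ := hS ⟨u, huS⟩ ⟨v, hvS⟩
    obtain ⟨d, -, ⟨i', hi'j, hai'⟩, hb⟩ := p.exists_boundary_dart early ⟨i, hij, hui⟩ hv
    obtain ⟨t, hat, hbt⟩ := h.exists_mem_of_adj (SimpleGraph.induce_adj.mp d.adj)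
    have hjt : j ≤ t := le_of_not_ge fun htj => hb ⟨t, htj, hbt⟩
    exact ⟨d.fst, d.fst.2, (h.ordConnected _).out hai' hat ⟨hi'j, hjt⟩⟩

theorem IsPathDecomposition.exists_bag_meeting_all [Finite κ] [Nonempty κ]
    (h : IsPathDecomposition G Bag) {B : κ → Set V} (hB : ∀ k, (G.induce (B k)).Connected)
    (hadj : Pairwise fun k l => ∃ u ∈ B k, ∃ v ∈ B l, G.Adj u v) :
    ∃ i, ∀ k, ∃ v ∈ B k, v ∈ Bag i := by
  suffices (⋂ k, {i | ∃ v ∈ B k, v ∈ Bag i}).Nonempty by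
    simpa only [Set.Nonempty, Set.mem_iInter, Set.mem_ofPred_eq] using this
  refine nonempty_iInter_of_ordConnected
    (fun k => h.ordConnected_meeting (hB k).preconnected) fun k l => ?_
  obtain rfl | hkl := eq_or_ne k l
  · obtain ⟨v, hv⟩ := (hB k).nonempty
    obtain ⟨i, hi⟩ := h.exists_mem v
    exact ⟨i, ⟨v, hv, hi⟩, ⟨v, hv, hi⟩⟩
  · obtain ⟨u, hu, v, hv, huv⟩ := hadj hkl
    obtain ⟨i, hui, hvi⟩ := h.exists_mem_of_adj huv
    exact ⟨i, ⟨u, hu, hui⟩, ⟨v, hv, hvi⟩⟩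

theorem IsCompleteMinorModel.exists_card_le_card_bag [Fintype κ] [Nonempty κ] {B : κ → Set V}
    (hB : IsCompleteMinorModel G B) (h : IsPathDecomposition G Bag) :
    ∃ i, Fintype.card κ ≤ (Bag i).card := by
  obtain ⟨i, hi⟩ := h.exists_bag_meeting_all hB.connected hB.exists_adj
  choose f hfB hfi using hi
  have hf : Function.Injective f := fun k l hkl =>
    hB.disjoint.eq (Set.not_disjoint_iff.mpr ⟨f k, hfB k, hkl ▸ hfB l⟩)
  exact ⟨i, Finset.card_le_card_of_injOn f (fun k _ => hfi k) hf.injOn⟩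

theorem IsCompleteMinorModel.card_le_of_hasPathDecompOfWidth [DecidableEq V] [Fintype κ]
    {B : κ → Set V} (hB : IsCompleteMinorModel G B) {w : ℕ} (h : HasPathDecompOfWidth G w) :
    Fintype.card κ ≤ w + 1 := by
  obtain ⟨m, Bag, hmem, hadj, hinterval, hcard⟩ := h
  have hBag : IsPathDecomposition G Bag :=
    ⟨hmem, hadj _ _, fun v => ⟨fun i hi l hl j hj => hinterval v i j l hj.1 hj.2 hi hl⟩⟩
  cases isEmpty_or_nonempty κ
  · simp only [Fintype.card_eq_zero, zero_le]
  · obtain ⟨i, hi⟩ := hB.exists_card_le_card_bag hBag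
    exact hi.trans (hcard i)

end PathDecomposition

section CrossDouble

variable {V W : Type*}

/-- Two disjoint copies of `H`, with each of the terminals `x`, `y` of the first copy joined to each
of the terminals `x`, `y` of the second. -/
def crossDouble (H : SimpleGraph V) (x y : V) : SimpleGraph (V ⊕ V) :=
  (H ⊕g H) ⊔ (⊤ : SimpleGraph (V ⊕ V)).between {.inl x, .inl y} {.inr x, .inr y}

instance (G : SimpleGraph V) (H : SimpleGraph W) [DecidableRel G.Adj] [DecidableRel H.Adj] :
    DecidableRel (G ⊕g H).Adj
  | .inl u, .inl v => inferInstanceAs (Decidable (G.Adj u v))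
  | .inr u, .inr v => inferInstanceAs (Decidable (H.Adj u v))
  | .inl _, .inr _ => .isFalse (by simp)
  | .inr _, .inl _ => .isFalse (by simp)

instance [DecidableEq V] (H : SimpleGraph V) [DecidableRel H.Adj] (x y : V) :
    DecidableRel (crossDouble H x y).Adj := by
  unfold crossDouble
  infer_instance

theorem crossDouble_adj_inl_inr (H : SimpleGraph V) {x y u v : V} (hu : u = x ∨ u = y)
    (hv : v = x ∨ v = y) : (crossDouble H x y).Adj (.inl u) (.inr v) :=
  .inr ⟨Sum.inl_ne_inr, .inl ⟨hu.imp (congrArg _) (congrArg _), hv.imp (congrArg _) (congrArg _)⟩⟩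

theorem not_colorable_three_crossDouble {H : SimpleGraph V} {x y : V}
    (hsep : ∀ C : H.Coloring (Fin 3), C x ≠ C y) : ¬ (crossDouble H x y).Colorable 3 := by
  rintro ⟨C⟩
  have hleft : C (.inl x) ≠ C (.inl y) :=
    hsep (C.comp (.comp (.ofLE le_sup_left) SimpleGraph.Embedding.sumInl.toHom))
  have hright : C (.inr x) ≠ C (.inr y) :=
    hsep (C.comp (.comp (.ofLE le_sup_left) SimpleGraph.Embedding.sumInr.toHom))
  have hcross {u v : V} (hu : u = x ∨ u = y) (hv : v = x ∨ v = y) : C (.inl u) ≠ C (.inr v) :=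
    C.valid (crossDouble_adj_inl_inr H hu hv)
  have hxx := hcross (.inl rfl) (.inl rfl)
  have hxy := hcross (.inl rfl) (.inr rfl)
  have hyx := hcross (.inr rfl) (.inl rfl)
  have hyy := hcross (.inr rfl) (.inr rfl)
  omega

end CrossDouble

section Gadget

/-- The 11-vertex graph with terminals `0` and `1` from which the example is built. -/
def gadget : SimpleGraph (Fin 11) :=
  .fromEdgeSet ({s(0, 2), s(0, 5), s(1, 3), s(1, 4), s(2, 3), s(2, 4), s(4, 5), s(3, 6), s(5, 6),
    s(4, 7), s(6, 7), s(2, 8), s(6, 8), s(5, 9), s(8, 9), s(3, 10), s(7, 10), s(9, 10)} :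
    Finset (Sym2 (Fin 11)))

instance : DecidableRel gadget.Adj := by
  unfold gadget
  infer_instance

theorem gadget_coloring_terminals_ne (C : gadget.Coloring (Fin 3)) : C 0 ≠ C 1 := by
  -- If the terminals agree, the colors of `5`, …, `10` are forced one after the other.
  intro h01
  have hadj (u v : Fin 11) (huv : gadget.Adj u v := by decide +kernel) : C u ≠ C v := C.valid huv
  have third_color {a b p q : Fin 3} (hab : a ≠ b) (hpa : a ≠ p) (hpb : b ≠ p) (hqa : a ≠ q)
      (hqb : b ≠ q) : p = q := by omega
  have h25 : C 2 = C 5 :=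
    third_color (h01 ▸ hadj 1 4) (hadj 0 2) (hadj 4 2) (hadj 0 5) (hadj 4 5)
  have h06 : C 0 = C 6 :=
    third_color (hadj 2 3) (hadj 2 0) (h01 ▸ hadj 3 1) (h25 ▸ hadj 5 6) (hadj 3 6)
  have h27 : C 2 = C 7 :=
    third_color (h01 ▸ hadj 1 4) (hadj 0 2) (hadj 4 2) (h06 ▸ hadj 6 7) (hadj 4 7)
  have h38 : C 3 = C 8 :=
    third_color (hadj 0 2) (h01 ▸ hadj 1 3) (hadj 2 3) (h06 ▸ hadj 6 8) (hadj 2 8)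
  have h09 : C 0 = C 9 :=
    third_color (hadj 2 3) (hadj 2 0) (h01 ▸ hadj 3 1) (h25 ▸ hadj 5 9) (h38 ▸ hadj 8 9)
  have h010 : C 0 = C 10 :=
    third_color (hadj 2 3) (hadj 2 0) (h01 ▸ hadj 3 1) (h27 ▸ hadj 7 10) (hadj 3 10)
  exact absurd (h09.symm.trans h010) (hadj 9 10)

end Gadget

section DoubledGadget

/-- The cross double of the gadget on the vertex set `Fin 22`: the copies of the vertex `v` of the
gadget are `v` and `v + 11`. -/
def doubledGadget : SimpleGraph (Fin 22) :=
  (crossDouble gadget 0 1).comap (finSumFinEquiv (m := 11) (n := 11)).symm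

instance : DecidableRel doubledGadget.Adj := by
  unfold doubledGadget
  infer_instance

theorem cliqueFree_three_doubledGadget : doubledGadget.CliqueFree 3 := by
  intro s hs
  obtain ⟨a, b, c, hab, hac, hbc, -⟩ := SimpleGraph.is3Clique_iff.mp hs
  have no_triangle : ∀ a b, doubledGadget.Adj a b → ∀ c, doubledGadget.Adj a c →
      ¬ doubledGadget.Adj b c := by decide +kernel
  exact no_triangle a b hab c hac hbc

theorem degree_doubledGadget_le : ∀ v, doubledGadget.degree v ≤ 4 := by
  decide +kernel

theorem degree_doubledGadget_zero : doubledGadget.degree 0 = 4 := by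
  decide +kernel

theorem colorable_four_doubledGadget : doubledGadget.Colorable 4 := by
  -- The terminals of the first copy are colored `0` and `1`, those of the reversed one `3` and `2`.
  let gadgetColor : Fin 11 → Fin 4 := ![0, 1, 1, 0, 0, 2, 1, 2, 2, 0, 1]
  let color : Fin 22 → Fin 4 := Fin.append gadgetColor (Fin.rev ∘ gadgetColor)
  have hcolor : ∀ u v, doubledGadget.Adj u v → color u ≠ color v := by decide +kernel
  exact ⟨.mk color (hcolor _ _)⟩

theorem not_colorable_three_doubledGadget : ¬ doubledGadget.Colorable 3 := fun h =>
  not_colorable_three_crossDouble gadget_coloring_terminals_ne <|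
    h.of_hom (SimpleGraph.Iso.comap finSumFinEquiv.symm _).symm.toHom

theorem chromaticNumber_doubledGadget : doubledGadget.chromaticNumber = 4 :=
  SimpleGraph.chromaticNumber_eq_iff_colorable_not_colorable.mpr
    ⟨colorable_four_doubledGadget, not_colorable_three_doubledGadget⟩

theorem hasPathDecompOfWidth_four_doubledGadget : HasPathDecompOfWidth doubledGadget 4 := by
  -- Each half sweeps one copy of the gadget, starting or ending at the bag of all four terminals.
  let Bag : Fin 15 → Finset (Fin 22) :=
    ![{5, 7, 8, 9, 10}, {3, 5, 7, 8, 10}, {3, 5, 6, 7, 8}, {3, 4, 5, 7, 8}, {0, 3, 4, 5, 8},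
      {0, 2, 3, 4, 8}, {0, 1, 3, 4}, {0, 1, 11, 12}, {11, 12, 14, 15}, {11, 13, 14, 15, 19},
      {11, 14, 15, 16, 19}, {14, 15, 16, 18, 19}, {14, 16, 17, 18, 19}, {14, 16, 18, 19, 21},
      {16, 18, 19, 20, 21}]
  exact ⟨15, Bag, by decide +kernel, by decide +kernel, by decide +kernel, by decide +kernel⟩

theorem isCompleteMinorModel_doubledGadget :
    IsCompleteMinorModel doubledGadget fun k : Fin 5 =>
      {![0, 2, 4, 6, 9] k, ![5, 3, 7, 8, 10] k} where
  connected k := SimpleGraph.induce_pair_connected_of_adj (by revert k; decide +kernel)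
  disjoint k l hkl := Set.disjoint_left.mpr (by revert k l; decide +kernel)
  exists_adj k l := by revert k l; decide +kernel

theorem not_hasPathDecompOfWidth_three_doubledGadget : ¬ HasPathDecompOfWidth doubledGadget 3 :=
  fun h => absurd (isCompleteMinorModel_doubledGadget.card_le_of_hasPathDecompOfWidth h)
    (by decide)

end DoubledGadget

/-- There exists a finite simple triangle-free graph with exactly 22 vertices that has
maximum degree 4 (every vertex has at most 4 neighbors, and some vertex has exactly 4),
chromatic number 4, admits a path decomposition of width at most 4, and admits no path
decomposition of width at most 3 (i.e., it has pathwidth exactly 4). -/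
theorem stmt_13 :
    ∃ G : SimpleGraph (Fin 22),
      G.CliqueFree 3 ∧
      (∀ v, (G.neighborSet v).ncard ≤ 4) ∧ (∃ v, (G.neighborSet v).ncard = 4) ∧
      G.chromaticNumber = 4 ∧
      HasPathDecompOfWidth G 4 ∧ ¬ HasPathDecompOfWidth G 3 := by
  exact ⟨doubledGadget, cliqueFree_three_doubledGadget,
    fun v => (ncard_neighborSet_eq_degree _ v).trans_le (degree_doubledGadget_le v),
    ⟨0, (ncard_neighborSet_eq_degree _ 0).trans degree_doubledGadget_zero⟩,
    chromaticNumber_doubledGadget,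
    hasPathDecompOfWidth_four_doubledGadget, not_hasPathDecompOfWidth_three_doubledGadget⟩
end

section
/- There exists a finite simple triangle-free graph with maximum degree 4 and chromatic number 4. Consequently, the bound χ(G) ≤ ⌈(Δ(G)+3)/2⌉ in Reed's conjecture for triangle-free graphs cannot be improved to ⌈(Δ(G)+3)/2⌉ − 1 at maximum degree 4. -/
/-! The circulant graph on `ℤ/13` with jumps `±1, ±5` is 4-regular, and triangle-free because its
set of jumps is sum-free. Its independent sets have at most 4 elements, so at least
`⌈13 / 4⌉ = 4` colours are needed. Indeed, by translation an independent set may be assumed to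
contain `0`, and the 8 non-neighbours of `0` lie on an 8-cycle. An independent set containing half
of the vertices of an even cycle has to alternate along it, and each of the two alternating sets on
this 8-cycle contains both ends of a chord. -/

section IndependentSets

open Finset SimpleGraph

theorem card_le_mul_indepNum_of_colorable {V : Type*} [Fintype V] {G : SimpleGraph V} {n : ℕ}
    (hG : G.Colorable n) : Fintype.card V ≤ n * G.indepNum := by
  classical
  obtain ⟨C⟩ := hG
  have card_colorClass_le (c : Fin n) : #{v | C v = c} ≤ G.indepNum :=
    IsIndepSet.card_le_indepNum <| by
      rw [coe_filter_univ]
      exact C.isIndepSet_colorClass c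
  simpa [mul_comm] using card_le_mul_card_image_of_maps_to (s := univ)
    (fun v _ ↦ mem_univ (C v)) G.indepNum fun c _ ↦ card_colorClass_le c

theorem isIndepSet_preimage {V W : Type*} {G : SimpleGraph V} {H : SimpleGraph W} (f : H →g G)
    {t : Set V} (ht : G.IsIndepSet t) : H.IsIndepSet (f ⁻¹' t) :=
  fun _ hx _ hy _ hxy ↦ ht hx hy (f.map_adj hxy).ne (f.map_adj hxy)

theorem card_le_succ_of_nonneighbors_mem_range {V ι : Type*} [Finite ι] {G : SimpleGraph V}
    {v : V} {c : ι → V} {k : ℕ} {t : Finset V} (ht : G.IsIndepSet t) (hv : v ∈ t)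
    (hc : ∀ w, w ≠ v → ¬ G.Adj v w → w ∈ Set.range c)
    (hk : ∀ T : Finset ι, (G.comap c).IsIndepSet T → #T ≤ k) : #t ≤ k + 1 := by
  classical
  have := Fintype.ofFinite ι
  let T : Finset ι := {i | c i ∈ t}
  have indep_T : (G.comap c).IsIndepSet T := by
    rw [coe_filter_univ]
    exact isIndepSet_preimage (Hom.comap c G) ht
  have erase_subset : t.erase v ⊆ T.image c := by
    intro w hw
    obtain ⟨hwv, hwt⟩ := mem_erase.mp hw
    obtain ⟨i, rfl⟩ := hc w hwv (ht hv hwt hwv.symm)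
    exact mem_image_of_mem c (by simpa [T] using hwt)
  calc #t = #(t.erase v) + 1 := (card_erase_add_one hv).symm
    _ ≤ #T + 1 := by gcongr; exact (card_le_card erase_subset).trans card_image_le
    _ ≤ k + 1 := by gcongr; exact hk T indep_T

theorem add_mem_iff_notMem_of_card_le_two_mul {A : Type*} [AddGroup A] [Fintype A] {T : Finset A}
    {a : A} (hT : ∀ x ∈ T, x + a ∉ T) (hcard : Fintype.card A ≤ 2 * #T) (x : A) :
    x + a ∈ T ↔ x ∉ T := by
  classical
  have map_eq_compl : T.map (addRightEmbedding a) = Tᶜ := by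
    refine eq_of_subset_of_card_le (fun y hy ↦ ?_) ?_
    · obtain ⟨x, hx, rfl⟩ := mem_map.mp hy
      exact mem_compl.mpr (hT x hx)
    · rw [card_map, card_compl]
      lia
  have mem_iff : x ∈ T ↔ x + a ∈ Tᶜ := by
    rw [← map_eq_compl]
    exact (mem_map' (addRightEmbedding a)).symm
  rw [mem_iff, mem_compl, not_not]

theorem two_mul_card_lt_of_isIndepSet_of_even_chords {A : Type*} [AddGroup A] [Fintype A]
    {H : SimpleGraph A} {a u : A} {k l : ℕ} (hcycle : ∀ x, H.Adj x (x + a))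
    (hchord : H.Adj u (u + k • (a + a)))
    (hchord' : H.Adj (u + a) (u + a + l • (a + a))) {T : Finset A} (hT : H.IsIndepSet T) :
    2 * #T < Fintype.card A := by
  by_contra! hcard
  have alternate : ∀ x, x + a ∈ T ↔ x ∉ T :=
    add_mem_iff_notMem_of_card_le_two_mul
      (fun x hx hxa ↦ hT hx hxa (hcycle x).ne (hcycle x)) hcard
  have periodic (x : A) (n : ℕ) (hx : x ∈ T) : x + n • (a + a) ∈ T := by
    induction n with
    | zero => simpa
    | succ n ih => rwa [succ_nsmul, ← add_assoc, ← add_assoc, alternate, alternate, not_not]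
  by_cases hu : u ∈ T
  · exact hT hu (periodic u k hu) hchord.ne hchord
  · have hua : u + a ∈ T := (alternate u).mpr hu
    exact hT hua (periodic (u + a) l hua) hchord'.ne hchord'

end IndependentSets

section Circulant

open Finset SimpleGraph

variable {A : Type*} [AddGroup A] {s : Set A}

theorem circulantGraph_adj_iff_sub_mem (hs : 0 ∉ s) {u v : A} :
    (circulantGraph s).Adj u v ↔ v - u ∈ s ∪ -s := by
  rw [circulantGraph_adj, Set.mem_union, Set.mem_neg, neg_sub, or_comm, and_iff_right_iff_imp]
  rintro h rfl
  simp [hs] at h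

theorem ncard_neighborSet_circulantGraph (hs : 0 ∉ s) (v : A) :
    ((circulantGraph s).neighborSet v).ncard = (s ∪ -s).ncard := by
  have neighborSet_eq : (circulantGraph s).neighborSet v = (· + v) '' (s ∪ -s) := by
    ext w
    rw [mem_neighborSet, circulantGraph_adj_iff_sub_mem hs, Set.image_add_right, Set.mem_preimage,
      sub_eq_add_neg]
  rw [neighborSet_eq, Set.ncard_image_of_injective _ (add_left_injective v)]

theorem cliqueFree_three_circulantGraph
    (hs : ∀ a ∈ s ∪ -s, ∀ b ∈ s ∪ -s, a + b ∉ s ∪ -s) : (circulantGraph s).CliqueFree 3 := by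
  classical
  have zero_notMem : (0 : A) ∉ s := fun h ↦
    hs 0 (Or.inl h) 0 (Or.inl h) (by rw [add_zero]; exact Or.inl h)
  intro t ht
  obtain ⟨x, y, z, hxy, hxz, hyz, -⟩ := is3Clique_iff.mp ht
  rw [circulantGraph_adj_iff_sub_mem zero_notMem] at hxy hxz hyz
  exact hs _ hyz _ hxy (by rwa [sub_add_sub_cancel])

theorem indepNum_circulantGraph_le [Finite A] {k : ℕ}
    (hk : ∀ t : Finset A, 0 ∈ t → (circulantGraph s).IsIndepSet t → #t ≤ k) :
    (circulantGraph s).indepNum ≤ k := by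
  obtain ⟨t, indep_t, card_t⟩ := (circulantGraph s).exists_isNIndepSet_indepNum
  rw [← card_t]
  obtain rfl | ⟨v, hv⟩ := t.eq_empty_or_nonempty
  · simp
  let translate : circulantGraph s →g circulantGraph s :=
    ⟨(· + v), circulantGraph_adj_translate.mpr⟩
  have indep_translate : (circulantGraph s).IsIndepSet (t.map (addRightEmbedding (-v))) := by
    convert isIndepSet_preimage translate indep_t
    ext x
    simp [translate, ← sub_eq_add_neg, sub_eq_iff_eq_add]
  rw [← card_map (addRightEmbedding (-v))]
  exact hk _ (mem_map.mpr ⟨v, hv, add_neg_cancel v⟩) indep_translate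

end Circulant

section CyclotomicGraph

open Finset SimpleGraph

/-- The circulant graph on `ℤ/13` with jumps `±1, ±5`, which are the nonzero cubes modulo 13.
It witnesses `R(3, 5) > 13` for the Ramsey number. -/
abbrev cyclotomicGraph13 : SimpleGraph (Fin 13) :=
  circulantGraph {1, 5}

theorem cyclotomicGraph13_cliqueFree_three : cyclotomicGraph13.CliqueFree 3 :=
  cliqueFree_three_circulantGraph (by
    simp only [Set.mem_union, Set.mem_neg, Set.mem_insert_iff, Set.mem_singleton_iff]
    decide)

theorem ncard_neighborSet_cyclotomicGraph13 (v : Fin 13) :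
    (cyclotomicGraph13.neighborSet v).ncard = 4 := by
  have jumps_eq : ({1, 5} ∪ -{1, 5} : Set (Fin 13)) = ({1, 5, 8, 12} : Finset (Fin 13)) := by
    ext x
    simp only [Set.mem_union, Set.mem_neg, Set.mem_insert_iff, Set.mem_singleton_iff, mem_coe,
      mem_insert, mem_singleton]
    revert x
    decide
  rw [ncard_neighborSet_circulantGraph (by simp), jumps_eq, Set.ncard_coe_finset]
  rfl

/-- An 8-cycle through the non-neighbours of `0` in `cyclotomicGraph13`. -/
def nonneighborCycle : Fin 8 → Fin 13 :=
  ![2, 3, 4, 9, 10, 11, 6, 7]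

theorem card_le_three_of_isIndepSet_comap_nonneighborCycle {T : Finset (Fin 8)}
    (hT : (cyclotomicGraph13.comap nonneighborCycle).IsIndepSet T) : #T ≤ 3 := by
  have two_mul_card_lt : 2 * #T < Fintype.card (Fin 8) :=
    two_mul_card_lt_of_isIndepSet_of_even_chords (a := 1) (u := 0) (k := 2) (l := 2)
      (by simp only [comap_adj]; decide) (by simp only [comap_adj]; decide)
      (by simp only [comap_adj]; decide) hT
  rw [Fintype.card_fin] at two_mul_card_lt
  lia

theorem indepNum_cyclotomicGraph13_le : cyclotomicGraph13.indepNum ≤ 4 :=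
  indepNum_circulantGraph_le fun _ zero_mem indep ↦
    card_le_succ_of_nonneighbors_mem_range (c := nonneighborCycle) indep zero_mem (by decide)
      fun _ ↦ card_le_three_of_isIndepSet_comap_nonneighborCycle

-- Adjacent `x < y` differ by 1, 5, 8 or 12: the even differences are too large for both to lie in
-- `{0, …, 7}` or both in `{8, …, 12}`.
theorem cyclotomicGraph13_colorable_four : cyclotomicGraph13.Colorable 4 :=
  (Coloring.mk (fun x ↦ (decide (x < 8), decide (Even x.val))) (by decide) :
    cyclotomicGraph13.Coloring (Bool × Bool)).colorable

theorem chromaticNumber_cyclotomicGraph13 : cyclotomicGraph13.chromaticNumber = 4 := by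
  refine le_antisymm cyclotomicGraph13_colorable_four.chromaticNumber_le
    (le_chromaticNumber_iff_colorable.mpr fun m hm ↦ ?_)
  have thirteen_le : 13 ≤ m * 4 :=
    calc 13 = Fintype.card (Fin 13) := (Fintype.card_fin 13).symm
      _ ≤ m * cyclotomicGraph13.indepNum := card_le_mul_indepNum_of_colorable hm
      _ ≤ m * 4 := by gcongr; exact indepNum_cyclotomicGraph13_le
  lia

end CyclotomicGraph

/-- There exists a finite simple triangle-free graph with maximum degree 4 (every vertex
has at most 4 neighbors and some vertex has exactly 4 neighbors) and chromatic number 4.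
Since `⌈(4 + 3) / 2⌉ = 4`, such a graph shows that the bound `χ(G) ≤ ⌈(Δ(G) + 3) / 2⌉`
in Reed's conjecture for triangle-free graphs cannot be improved to
`⌈(Δ(G) + 3) / 2⌉ − 1 = 3` at maximum degree 4. -/
theorem stmt_14 :
    ∃ (n : ℕ) (G : SimpleGraph (Fin n)),
      G.CliqueFree 3 ∧
      (∀ v, (G.neighborSet v).ncard ≤ 4) ∧ (∃ v, (G.neighborSet v).ncard = 4) ∧
      G.chromaticNumber = 4 := by
  exact ⟨13, cyclotomicGraph13, cyclotomicGraph13_cliqueFree_three,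
    fun v ↦ (ncard_neighborSet_cyclotomicGraph13 v).le, ⟨0, ncard_neighborSet_cyclotomicGraph13 0⟩,
    chromaticNumber_cyclotomicGraph13⟩
end
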